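/- arXiv:1004.0327 — 3 statements merged into one kernel-verified Lean document; each statement's English description precedes it below -/
import Mathlib

section
/- Let d, g, m be natural numbers with g ≥ 2d and m ≤ 2g−2. The function Z_{g,m}(z) = (2/(√(1+4z)+1))^{2g−2−m} · (1+4z)^{(g−1)/2}, defined for real z ∈ (−1/4, 1/4), is real-analytic at 0, and its d-th Taylor coefficient at 0 (i.e. Z_{g,m}^{(d)}(0)/d!) equals [g!·(2g−2−m)! / ((g−2d)!·d!·(2g−2−m+d)!)] · Σ_{k=0}^{d} [(−g/2+m/2+1−d)_k · (−g/2+(m+3)/2−d)_k · (−d)_k] / [((g+1)/2−d)_k · (g/2+1−d)_k · k!], where (x)_k = x(x+1)⋯(x+k−1) denotes the rising factorial. -/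
/-- The generating function `Z_{g,m}(z) = (2/(√(1+4z)+1))^{2g−2−m} · (1+4z)^{(g−1)/2}`. -/
noncomputable def Zgen (g m : ℝ) (z : ℝ) : ℝ :=
  (2 / (Real.sqrt (1 + 4 * z) + 1)) ^ (2 * g - 2 - m) * (1 + 4 * z) ^ ((g - 1) / 2)

/-- `d!` times the `q^d` coefficient of `(1+q)^g (1-q)^h`. -/
noncomputable def RR : ℕ → ℝ → ℝ → ℝ
  | 0, _, _ => 1
  | d + 1, g, h => g * RR d (g - 1) h - h * RR d g (h - 1)

lemma RR_succ (d : ℕ) (g h : ℝ) : RR (d+1) g h = g * RR d (g - 1) h - h * RR d g (h - 1) := rfl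

lemma RR_g (d : ℕ) : ∀ g h : ℝ, RR (d+1) (g+1) h = RR (d+1) g h + (d+1) * RR d g h := by
  induction d with
  | zero => intro g h; simp [RR]; ring
  | succ d ih =>
    intro g h
    have h1 := ih (g-1) h
    have h2 := ih g (h-1)
    rw [RR_succ (d+1) (g+1) h, RR_succ (d+1) g h]
    rw [sub_add_cancel] at h1
    rw [add_sub_cancel_right, h2]
    have h3 := RR_succ d g h
    push_cast
    linear_combination g * h1 - (d+1 : ℝ) * h3

lemma RR_h (d : ℕ) : ∀ g h : ℝ, RR (d+1) g (h+1) = RR (d+1) g h - (d+1) * RR d g h := by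
  induction d with
  | zero => intro g h; simp [RR]; ring
  | succ d ih =>
    intro g h
    have h1 := ih (g-1) h
    have h2 := ih g (h-1)
    rw [RR_succ (d+1) (g) (h+1), RR_succ (d+1) g h]
    rw [sub_add_cancel] at h2
    rw [add_sub_cancel_right, h1]
    have h3 := RR_succ d g h
    push_cast
    linear_combination - h * h2 + (d+1 : ℝ) * h3

lemma RR_star (d : ℕ) (g h : ℝ) :
    (g + h - d) * RR d g h = g * RR d (g-1) h + h * RR d g (h-1) := by
  cases d with
  | zero => simp [RR]
  | succ d =>
    have h1 := RR_g d (g-1) h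
    have h2 := RR_h d g (h-1)
    rw [sub_add_cancel] at h1 h2
    have h3 := RR_succ d g h
    push_cast
    linear_combination g * h1 + h * h2 - (d+1:ℝ) * h3

lemma RR_mix (d : ℕ) (g h : ℝ) :
    RR d g (h-1) + RR d (g-1) h = 2 * RR d (g-1) (h-1) := by
  cases d with
  | zero => simp [RR]; norm_num
  | succ d =>
    have h1 := RR_g d (g-1) (h-1)
    have h2 := RR_h d (g-1) (h-1)
    rw [sub_add_cancel] at h1 h2
    linear_combination h1 + h2

lemma RR_three (d : ℕ) (g h : ℝ) :
    (g + h - d - 1) * RR (d+1) g h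
      = g * (g-1) * RR d (g-2) h - h * (h-1) * RR d g (h-2) := by
  have h1 := RR_star d (g-1) h
  have h2 := RR_star d g (h-1)
  have h3 := RR_succ d g h
  rw [show g - 1 - 1 = g - 2 by ring] at h1
  rw [show h - 1 - 1 = h - 2 by ring] at h2
  rw [h3]
  linear_combination g * h1 - h * h2

lemma RR_four (d : ℕ) (g h : ℝ) :
    RR (d+1) g h = -(g + h - 2*d - 2) * RR d (g-1) h + 2 * (g-1) * RR d (g-2) h := by
  have h1 := RR_star d (g-1) h
  have h2 := RR_mix d g h
  have h3 := RR_succ d g h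
  rw [show g - 1 - 1 = g - 2 by ring] at h1
  rw [h3]
  linear_combination 2 * h1 - h * h2

/-- falling factorial -/
noncomputable def FF : ℕ → ℝ → ℝ
  | 0, _ => 1
  | k + 1, x => x * FF k (x - 1)

lemma FF_two (k : ℕ) (x : ℝ) : FF (2 * (k+1)) x = x * (x-1) * FF (2*k) (x-2) := by
  rw [show 2 * (k+1) = 2*k+1+1 by ring, FF, FF, show x - 1 - 1 = x - 2 by ring]
  ring

/-- the finite sum -/
noncomputable def PP (d : ℕ) (g h : ℝ) : ℝ :=
  ∑ k ∈ Finset.range (d+1), (d.choose k : ℝ) * ((-1)^k * FF (2*(d-k)) g * FF (2*k) h)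

lemma PP_succ (d : ℕ) (g h : ℝ) :
    PP (d+1) g h = g*(g-1) * PP d (g-2) h - h*(h-1) * PP d g (h-2) := by
  unfold PP
  rw [Finset.sum_choose_succ_mul (fun k j => (-1)^k * FF (2*j) g * FF (2*k) h) d, sub_eq_add_neg,
    ← neg_mul, Finset.mul_sum, Finset.mul_sum]
  congr 1
  · refine Finset.sum_congr rfl fun k hk => ?_
    have : d + 1 - k = (d - k) + 1 := by
      have := Finset.mem_range.1 hk
      omega
    rw [this, FF_two]; ring
  · refine Finset.sum_congr rfl fun k hk => ?_
    rw [FF_two]; ring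

lemma PP_eq (d : ℕ) : ∀ g h : ℝ,
    PP d g h = (ascPochhammer ℝ d).eval (g + h - 2*d + 1) * RR d g h := by
  induction d with
  | zero => intro g h; simp [PP, RR, FF]
  | succ d ih =>
    intro g h
    rw [PP_succ, ih, ih, ascPochhammer_succ_eval]
    have h3 := RR_three d g h
    rw [show g - 2 + h - 2*d + 1 = g + h - 2*(d+1 : ℕ) + 1 by push_cast; ring,
      show g + (h - 2) - 2*d + 1 = g + h - 2*(d+1 : ℕ) + 1 by push_cast; ring]
    generalize Polynomial.eval _ (ascPochhammer ℝ d) = A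
    push_cast
    linear_combination -A * h3

lemma Zgen_analytic (g m : ℝ) : AnalyticAt ℝ (Zgen g m) 0 := by
  apply ContDiffAt.analyticAt
  unfold Zgen
  have h0 : ContDiffAt ℝ ⊤ (fun z : ℝ => 1 + 4 * z) 0 := by fun_prop
  have h1 : ContDiffAt ℝ ⊤ (fun z : ℝ => Real.sqrt (1 + 4 * z)) 0 := h0.sqrt (by norm_num)
  refine ContDiffAt.mul ?_ ?_
  · refine ContDiffAt.rpow_const_of_ne ?_ ?_
    · exact contDiffAt_const.div (h1.add contDiffAt_const) (by norm_num)
    · norm_num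
  · exact h0.rpow_const_of_ne (by norm_num)

lemma Zgen_hasDerivAt (g m z : ℝ) (hz : 0 < 1 + 4 * z) :
    HasDerivAt (Zgen g m)
      (-(2*g-2-m) * Zgen (g-1) (m-3) z + 2 * (g-1) * Zgen (g-2) (m-4) z) z := by
  have h0 : HasDerivAt (fun z : ℝ => 1 + 4 * z) 4 z := by
    simpa using ((hasDerivAt_id z).const_mul 4).const_add 1
  have h1 := h0.sqrt hz.ne'
  have hs : 0 < Real.sqrt (1 + 4*z) := Real.sqrt_pos.2 hz
  have hsq : Real.sqrt (1 + 4*z) ^ 2 = 1 + 4 * z := Real.sq_sqrt hz.le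
  have h2 := ((hasDerivAt_const z (2:ℝ)).div (h1.add_const 1) (by positivity)).rpow_const
    (p := 2*g-2-m) (Or.inl (by simp only [Pi.div_apply]; positivity))
  have h3 := h0.rpow_const (p := (g-1)/2) (Or.inl hz.ne')
  have h4 := h2.mul h3
  refine h4.congr_deriv ?_
  unfold Zgen
  simp only [Pi.div_apply]
  rw [show 2 * (g-1) - 2 - (m-3) = (2*g-2-m-1) + 2 by ring,
    show 2 * (g-2) - 2 - (m-4) = 2*g-2-m by ring,
    show (g-2-1)/2 = (g-1)/2-1 by ring,
    show (g-1)/2 = (g-1-1)/2 + 1/2 by ring,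
    Real.rpow_add hz _ (1/2), ← Real.sqrt_eq_rpow,
    Real.rpow_add (by positivity) _ 2, Real.rpow_two]
  generalize hS : Real.sqrt (1 + 4*z) = s at *
  generalize (1+4*z) ^ ((g-1-1)/2) = A
  generalize (1+4*z) ^ ((g-1-1)/2+1/2-1) = B
  generalize (2/(s+1))^(2*g-2-m-1) = C
  generalize (2/(s+1))^(2*g-2-m) = D
  field_simp
  ring

lemma Zgen_iter (d : ℕ) : ∀ g m : ℝ,
    iteratedDeriv d (Zgen g m) 0 = RR d g (g - 2 - m + 2*d) := by
  induction d with
  | zero =>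
    intro g m
    simp [RR, Zgen]
    norm_num
  | succ d ih =>
    intro g m
    rw [iteratedDeriv_succ']
    have hev : deriv (Zgen g m) =ᶠ[nhds 0]
        ((fun z => (-(2*g-2-m)) * Zgen (g-1) (m-3) z) + (fun z => (2 * (g-1)) * Zgen (g-2) (m-4) z)) := by
      have : ∀ᶠ z : ℝ in nhds 0, 0 < 1 + 4 * z := by
        apply ContinuousAt.eventually_lt <;> first | fun_prop | norm_num
      filter_upwards [this] with z hz
      exact (Zgen_hasDerivAt g m z hz).deriv
    have c1 : ContDiffAt ℝ d (Zgen (g-1) (m-3)) 0 := (Zgen_analytic _ _).contDiffAt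
    have c2 : ContDiffAt ℝ d (Zgen (g-2) (m-4)) 0 := (Zgen_analytic _ _).contDiffAt
    rw [hev.iteratedDeriv_eq, iteratedDeriv_add (contDiffAt_const.mul c1) (contDiffAt_const.mul c2),
      iteratedDeriv_const_mul _ c1, iteratedDeriv_const_mul _ c2, ih, ih, RR_four]
    push_cast
    rw [show g - 1 - 2 - (m - 3) + 2 * (d:ℝ) = g - 2 - m + 2 * (d+1) by ring,
      show g - 2 - 2 - (m - 4) + 2 * (d:ℝ) = g - 2 - m + 2 * (d+1) by ring]
    ring

lemma asc_double (k : ℕ) (a : ℝ) :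
    (ascPochhammer ℝ (2*k)).eval (2*a)
      = 4^k * ((ascPochhammer ℝ k).eval a * (ascPochhammer ℝ k).eval (a + 1/2)) := by
  induction k with
  | zero => simp
  | succ k ih =>
    rw [show 2*(k+1) = 2*k+1+1 by ring, ascPochhammer_succ_eval, ascPochhammer_succ_eval, ih,
      ascPochhammer_succ_eval, ascPochhammer_succ_eval]
    push_cast
    ring

lemma FF_succ_right (k : ℕ) : ∀ x : ℝ, FF (k+1) x = FF k x * (x - k) := by
  induction k with
  | zero => intro x; simp [FF]
  | succ k ih => intro x; rw [FF, ih, FF]; push_cast; ring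

lemma asc_FF (k : ℕ) (x : ℝ) : (ascPochhammer ℝ k).eval (-x) = (-1)^k * FF k x := by
  induction k with
  | zero => simp [FF]
  | succ k ih => rw [ascPochhammer_succ_eval, ih, FF_succ_right]; ring

lemma FF_nat (k : ℕ) : ∀ n : ℕ, FF k ((n + k : ℕ) : ℝ) * n.factorial = (n+k).factorial := by
  induction k with
  | zero => intro n; simp [FF]
  | succ k ih =>
    intro n
    rw [FF, show ((n + (k+1) : ℕ) : ℝ) - 1 = ((n + k : ℕ) : ℝ) by push_cast; ring, mul_assoc, ih,
      ← add_assoc, Nat.factorial_succ]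
    push_cast; ring

lemma asc_nat (k n : ℕ) :
    (ascPochhammer ℝ k).eval ((n:ℝ) + 1) * n.factorial = (n+k).factorial := by
  induction k with
  | zero => simp
  | succ k ih =>
    rw [ascPochhammer_succ_eval, ← add_assoc, Nat.factorial_succ]
    push_cast
    linear_combination ((n:ℝ) + 1 + k) * ih

lemma term_eq (d g m k n : ℕ) (hg : 2 * d ≤ g) (hn : n + m + 2 = 2 * g) (hk : k ≤ d) :
    ((g.factorial : ℝ) / ((g - 2 * d).factorial : ℝ)) *
            (((ascPochhammer ℝ k).eval (-(g : ℝ) / 2 + (m : ℝ) / 2 + 1 - d)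
                * (ascPochhammer ℝ k).eval (-(g : ℝ) / 2 + ((m : ℝ) + 3) / 2 - d)
                * (ascPochhammer ℝ k).eval (-(d : ℝ)))
              / ((ascPochhammer ℝ k).eval (((g : ℝ) + 1) / 2 - d)
                  * (ascPochhammer ℝ k).eval ((g : ℝ) / 2 + 1 - d)
                  * (k.factorial : ℝ)))
    = (d.choose k : ℝ) * ((-1)^k * FF (2*(d-k)) g * FF (2*k) (g - 2 - m + 2*d)) := by
  obtain ⟨e, rfl⟩ := Nat.exists_eq_add_of_le hg
  obtain ⟨j, rfl⟩ := Nat.exists_eq_add_of_le hk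
  rw [Nat.add_sub_cancel_left, Nat.add_sub_cancel_left]
  set g : ℕ := 2 * (k+j) + e with hgdef
  have e1 := asc_double k (-(g : ℝ) / 2 + (m : ℝ) / 2 + 1 - (k+j : ℕ))
  rw [show 2 * (-(g : ℝ) / 2 + (m : ℝ) / 2 + 1 - (k+j : ℕ)) = -(g - 2 - m + 2*(k+j:ℕ)) by ring,
    asc_FF, show (-(g : ℝ) / 2 + (m : ℝ) / 2 + 1 - (k+j : ℕ)) + 1/2
      = -(g : ℝ) / 2 + ((m : ℝ) + 3) / 2 - (k+j : ℕ) by ring, pow_mul, neg_one_sq, one_pow,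
    one_mul] at e1
  have e2 := asc_double k (((g : ℝ) + 1) / 2 - (k+j : ℕ))
  rw [show 2 * (((g : ℝ) + 1) / 2 - (k+j : ℕ)) = (e:ℝ) + 1 by rw [hgdef]; push_cast; ring,
    show ((g : ℝ) + 1) / 2 - (k+j : ℕ) + 1/2 = (g : ℝ) / 2 + 1 - (k+j : ℕ) by ring] at e2
  have e3 := asc_nat (2*k) e
  have e4 := FF_nat (2*j) (e + 2*k)
  rw [show e + 2*k + 2*j = g by omega] at e4
  have e5 := FF_nat k j
  rw [add_comm j k] at e5
  have e6 : ((k+j).choose k : ℝ) * k.factorial * j.factorial = (k+j).factorial := by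
    rw [Nat.choose_symm_add]; exact_mod_cast Nat.add_choose_mul_factorial_mul_factorial k j
  rw [asc_FF k, ← e4, e1]
  have p1 : (e.factorial : ℝ) ≠ 0 := by positivity
  have p2 : (k.factorial : ℝ) ≠ 0 := by positivity
  have p3 : (j.factorial : ℝ) ≠ 0 := by positivity
  have p4 : ((e+2*k).factorial : ℝ) ≠ 0 := by positivity
  rw [e2] at e3
  rw [← e6] at e5
  have e7 : FF k ((k + j : ℕ):ℝ) = ((k+j).choose k : ℝ) * k.factorial := mul_right_cancel₀ p3 e5
  rw [e7, ← e3]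
  rw [← e3] at p4
  have q1 := right_ne_zero_of_mul (left_ne_zero_of_mul p4)
  have q2 := left_ne_zero_of_mul q1
  have q3 := right_ne_zero_of_mul q1
  generalize Polynomial.eval (((g : ℝ) + 1) / 2 - (k+j : ℕ)) (ascPochhammer ℝ k) = A1 at *
  generalize Polynomial.eval ((g : ℝ) / 2 + 1 - (k+j : ℕ)) (ascPochhammer ℝ k) = A2 at *
  field_simp

theorem taylor_coeff_Zgen (d g m : ℕ) (hg : 2 * d ≤ g) (hm : m + 2 ≤ 2 * g) :
    AnalyticAt ℝ (Zgen g m) 0 ∧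
    iteratedDeriv d (Zgen g m) 0 / (d.factorial : ℝ) =
      ((g.factorial : ℝ) * ((2 * g - 2 - m).factorial : ℝ))
          / (((g - 2 * d).factorial : ℝ) * (d.factorial : ℝ)
              * ((2 * g - 2 - m + d).factorial : ℝ))
        * ∑ k ∈ Finset.range (d + 1),
            ((ascPochhammer ℝ k).eval (-(g : ℝ) / 2 + (m : ℝ) / 2 + 1 - d)
                * (ascPochhammer ℝ k).eval (-(g : ℝ) / 2 + ((m : ℝ) + 3) / 2 - d)
                * (ascPochhammer ℝ k).eval (-(d : ℝ)))
              / ((ascPochhammer ℝ k).eval (((g : ℝ) + 1) / 2 - d)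
                  * (ascPochhammer ℝ k).eval ((g : ℝ) / 2 + 1 - d)
                  * (k.factorial : ℝ)) := by

  refine ⟨Zgen_analytic _ _, ?_⟩
  obtain ⟨n, hn⟩ := Nat.exists_eq_add_of_le hm
  have hn' : 2 * g - 2 - m = n := by omega
  rw [hn', Zgen_iter]
  have hP := PP_eq d g ((g:ℝ) - 2 - m + 2*d)
  have hnr : (2:ℝ) * g = m + 2 + n := by exact_mod_cast hn
  rw [show (g:ℝ) + ((g:ℝ) - 2 - m + 2*d) - 2*d + 1 = (n:ℝ) + 1 by linarith] at hP
  have hA := asc_nat d n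
  have hS : PP d g ((g:ℝ) - 2 - m + 2*d) = _ :=
    Finset.sum_congr rfl fun k hk => (term_eq d g m k n hg (by omega)
      (Nat.lt_succ_iff.1 (Finset.mem_range.1 hk))).symm
  rw [← Finset.mul_sum] at hS
  rw [hS] at hP
  have p1 : (d.factorial : ℝ) ≠ 0 := by positivity
  have p2 : (n.factorial : ℝ) ≠ 0 := by positivity
  have p3 : ((n+d).factorial : ℝ) ≠ 0 := by positivity
  have p4 : ((g-2*d).factorial : ℝ) ≠ 0 := by positivity
  rw [← hA] at p3 ⊢
  have p5 := left_ne_zero_of_mul p3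
  generalize (Finset.sum (M := ℝ) (Finset.range (d+1)) _) = S at *
  field_simp at hP ⊢
  linear_combination -hP
end

section
/- Let d ≥ 3 be an integer. For a subgraph G of the complete graph on the vertex set {1,…,d} and for 2 ≤ j ≤ d, let indeg(G,j) = #{ i < j : {i,j} is an edge of G }, and set w_G = ∏_{j=2}^{d} (indeg(G,j))!. Then, summing over all connected spanning subgraphs G of the complete graph on {1,…,d} having exactly d edges: Σ_G w_G = ( Σ_{i=0}^{d−3} C(2d−1, i) ) · (d−1)!. -/
/-- `indeg(G,j) = #{i < j : {i,j} is an edge of G}`, the indegree of vertex `j`. -/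
noncomputable def indeg {d : ℕ} (G : SimpleGraph (Fin d)) (j : Fin d) : ℕ :=
  {i : Fin d | i < j ∧ G.Adj i j}.ncard

/-- The weight `w_G = ∏_j (indeg(G,j))!` of a subgraph of the complete graph. -/
noncomputable def graphWeight {d : ℕ} (G : SimpleGraph (Fin d)) : ℕ :=
  ∏ j : Fin d, (indeg G j).factorial


set_option linter.unusedSimpArgs false

namespace UC

def V (N : ℕ) : ℤ := ∑ i ∈ Finset.range (N - 1), ((2 * N + 1).choose i : ℤ)

lemma cat_diff (N : ℕ) : ((2 * N + 5).choose (N + 1) : ℤ) - (2 * N + 5).choose N =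
    catalan (N + 4) - 2 * catalan (N + 3) := by
  have h4 := Nat.succ_mul_centralBinom_succ (N + 3)
  rw [← succ_mul_catalan_eq_centralBinom, ← succ_mul_catalan_eq_centralBinom] at h4
  have h3 := succ_mul_catalan_eq_centralBinom (N + 3)
  have hb : (N + 3).centralBinom = 2 * (2 * N + 5).choose (N + 2) := by
    have hs := Nat.choose_symm_half (N + 2)
    rw [show 2 * (N + 2) + 1 = 2 * N + 5 by ring] at hs
    rw [Nat.centralBinom, show 2 * (N + 3) = 2 * N + 5 + 1 by ring, Nat.choose_succ_succ, hs]
    ring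
  rw [hb] at h3
  have b1 := Nat.choose_succ_right_eq (2 * N + 5) N
  have b2 := Nat.choose_succ_right_eq (2 * N + 5) (N + 1)
  rw [show 2 * N + 5 - N = N + 5 by omega] at b1
  rw [show 2 * N + 5 - (N + 1) = N + 4 by omega] at b2
  generalize (2 * N + 5).choose N = x0 at *
  generalize (2 * N + 5).choose (N + 1) = x1 at *
  generalize (2 * N + 5).choose (N + 1 + 1) = x2 at *
  generalize hc4 : catalan (N + 3 + 1) = c4 at *
  generalize catalan (N + 3) = c3 at *
  zify at *
  have hc : (N : ℤ) + 4 ≠ 0 := by omega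
  have hc5 : (N : ℤ) + 5 ≠ 0 := by omega
  apply mul_left_cancel₀ hc5
  apply mul_left_cancel₀ hc
  have h4' : ((N : ℤ) + 5) * c4 = 2 * (2 * N + 7) * c3 := by
    apply mul_left_cancel₀ hc
    linear_combination h4
  linear_combination (-(N + 4 : ℤ)) * h4' + (N + 4 : ℤ) * b1 - 4 * b2 - (2 * N + 4 : ℤ) * h3

lemma V_rec (N : ℕ) : V (N + 1) = 4 * V N + (catalan (N + 2) - 2 * catalan (N + 1)) := by
  rcases N with _ | _ | N
  · simp [V, catalan_two]
  · simp [V, catalan_two, catalan_three]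
  have h := cat_diff N
  have e : V (N + 3) = ∑ i ∈ Finset.range (N + 2), ((2 * N + 7).choose i : ℤ) := by
    simp only [V]; congr 1
  have e' : V (N + 2) = ∑ i ∈ Finset.range (N + 1), ((2 * N + 5).choose i : ℤ) := by
    simp only [V]; congr 1
  have p1 : ∀ m k : ℕ, ∑ i ∈ Finset.range (k + 1), ((m + 1).choose i : ℤ) =
      2 * ∑ i ∈ Finset.range k, (m.choose i : ℤ) + m.choose k := by
    intro m k
    induction k with
    | zero => simp
    | succ k ih =>
      rw [Finset.sum_range_succ, ih, Finset.sum_range_succ _ k, Nat.choose_succ_succ]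
      push_cast
      ring
  show V (N + 3) = 4 * V (N + 2) + (catalan (N + 4) - 2 * catalan (N + 3))
  rw [e, e', ← h, p1 (2 * N + 6) (N + 1), p1 (2 * N + 5) N, Finset.sum_range_succ _ N]
  rw [Nat.choose_succ_succ (2 * N + 5) N]
  push_cast
  ring

section ser
open PowerSeries

noncomputable def cs : ℤ⟦X⟧ := PowerSeries.mk (fun n => (catalan n : ℤ))

lemma cs_eq : cs = 1 + X * cs ^ 2 := by
  ext n
  rcases n with _ | n
  · simp [cs]
  · rw [map_add, coeff_succ_X_mul, sq, coeff_mul]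
    simp [cs, catalan_succ', coeff_one]

noncomputable def vs : ℤ⟦X⟧ := PowerSeries.mk V

lemma vs_eq : (1 - 4 * X) * vs = X ^ 2 * cs ^ 4 := by
  have : X ^ 2 * cs ^ 4 = cs ^ 2 - 2 * cs + 1 := by
    linear_combination (-cs + 1 - X * cs ^ 2) * cs_eq
  rw [this]
  have h2 : X * ((1 - 4 * X) * vs) = X * (cs ^ 2 - 2 * cs + 1) := by
    have : X * (cs ^ 2 - 2 * cs + 1) = cs - 1 - 2 * X * cs + X := by
      linear_combination -cs_eq
    rw [this]
    ext n
    have e1 : X * ((1 - 4 * X) * vs) = X * vs - (4 : ℤ) • (X * (X * vs)) := by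
      simp; ring
    have e2 : cs - 1 - 2 * X * cs + X = cs - 1 - (2 : ℤ) • (X * cs) + X := by
      simp; ring
    rw [e1, e2]
    have hz : constantCoeff (R := ℤ) cs = 1 := by simp [cs]
    rcases n with _ | _ | n
    · rw [map_sub, map_add, map_sub, map_sub, map_smul, map_smul]
      simp [hz]
    · rw [map_sub, map_add, map_sub, map_sub, map_smul, map_smul, coeff_succ_X_mul,
        coeff_succ_X_mul, coeff_succ_X_mul]
      simp [hz, vs, V, cs, coeff_one]
    · have h := V_rec n
      rw [map_sub, map_add, map_sub, map_sub, map_smul, map_smul, coeff_succ_X_mul,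
        coeff_succ_X_mul, coeff_succ_X_mul, coeff_succ_X_mul]
      simp [vs, cs, coeff_one, coeff_X, h]
  exact mul_left_cancel₀ PowerSeries.X_ne_zero h2

lemma vs_eq2 : vs = X * derivative ℤ cs - cs ^ 2 + cs + 2 * X * (cs * vs) := by
  have hd : derivative ℤ cs = cs ^ 2 + 2 * X * cs * derivative ℤ cs := by
    conv_lhs => rw [cs_eq]
    simp
    ring
  have hne : (1 - 2 * X * cs) ≠ 0 := by
    intro h
    have := congrArg (constantCoeff (R := ℤ)) h
    simp at this
  apply mul_left_cancel₀ hne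
  have h4 : (1 - 2 * X * cs) ^ 2 = 1 - 4 * X := by
    linear_combination -4 * X * cs_eq
  linear_combination vs_eq + vs * h4 - X * hd - (X * cs ^ 2 - cs) * cs_eq

lemma V_succ (N : ℕ) : V (N + 1) = (N + 1) * catalan (N + 1) - (catalan (N + 2) - catalan (N + 1)) +
    2 * ∑ p ∈ Finset.HasAntidiagonal.antidiagonal N, (catalan p.1 : ℤ) * V p.2 := by
  have h := congrArg (coeff (N + 1)) vs_eq2
  have e1 : 2 * X * (cs * vs) = (2 : ℤ) • (X * (cs * vs)) := by
    simp; ring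
  have e2 : coeff (N + 1) (cs ^ 2) = (catalan (N + 2) : ℤ) := by
    rw [catalan_succ', sq, coeff_mul]
    simp [cs]
  rw [e1, map_add, map_add, map_sub, e2, map_smul, coeff_succ_X_mul, coeff_succ_X_mul,
    coeff_mul, PowerSeries.coeff_derivative] at h
  simp [vs, cs] at h
  rw [h]
  ring

end ser


end UC

section helpers
open Classical Polynomial

namespace UC

variable {d : ℕ}

def Kp (S : Finset (Fin d)) (G : SimpleGraph (Fin d)) : Prop :=
  (∀ a b, G.Adj a b → a ∈ S) ∧ ∀ a ∈ S, ∀ b ∈ S, G.Reachable a b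

noncomputable def K (S : Finset (Fin d)) : Finset (SimpleGraph (Fin d)) :=
  Finset.univ.filter (Kp S)

lemma mem_K {S : Finset (Fin d)} {G : SimpleGraph (Fin d)} : G ∈ K S ↔ Kp S G := by
  simp [K]

attribute [irreducible] K

noncomputable def wt (G : SimpleGraph (Fin d)) : ℤ[X] :=
  C (graphWeight G : ℤ) * X ^ (G.edgeSet.ncard)

noncomputable def W (S : Finset (Fin d)) : ℤ[X] := ∑ G ∈ K S, wt G

noncomputable def Wg (g : ℕ → ℤ) (S : Finset (Fin d)) (M : Fin d) : ℤ[X] :=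
  ∑ G ∈ K S, wt G * C (g (indeg G M))

attribute [irreducible] wt W Wg

def ae (H : SimpleGraph (Fin d)) (i M : Fin d) : SimpleGraph (Fin d) where
  Adj a b := H.Adj a b ∨ (i ≠ M ∧ ((a = i ∧ b = M) ∨ (a = M ∧ b = i)))
  symm := ⟨by
    rintro a b (h | ⟨h, h'⟩)
    · exact Or.inl h.symm
    · exact Or.inr ⟨h, by tauto⟩⟩
  loopless := ⟨by
    rintro a (h | ⟨h, h'⟩)
    · exact H.loopless.irrefl a h
    · rcases h' with ⟨rfl, rfl⟩ | ⟨rfl, rfl⟩ <;> exact h rfl⟩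

def de (H : SimpleGraph (Fin d)) (i M : Fin d) : SimpleGraph (Fin d) where
  Adj a b := H.Adj a b ∧ ¬ ((a = i ∧ b = M) ∨ (a = M ∧ b = i))
  symm := ⟨by
    rintro a b ⟨h, h'⟩
    exact ⟨h.symm, by tauto⟩⟩
  loopless := ⟨by
    rintro a ⟨h, h'⟩
    exact H.loopless.irrefl a h⟩

def re (H : SimpleGraph (Fin d)) (A : Finset (Fin d)) : SimpleGraph (Fin d) where
  Adj a b := H.Adj a b ∧ a ∈ A ∧ b ∈ A
  symm := ⟨by
    rintro a b ⟨h, h'⟩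
    exact ⟨h.symm, by tauto⟩⟩
  loopless := ⟨by
    rintro a ⟨h, h'⟩
    exact H.loopless.irrefl a h⟩

lemma ae_de {G : SimpleGraph (Fin d)} {i M : Fin d} (h : G.Adj i M) : ae (de G i M) i M = G := by
  ext a b
  have := h.ne
  have := h.symm
  simp only [ae, de]
  constructor
  · rintro (h | ⟨_, (⟨rfl, rfl⟩ | ⟨rfl, rfl⟩)⟩) <;> tauto
  · tauto

lemma de_ae {H : SimpleGraph (Fin d)} {i M : Fin d} (h : ¬ H.Adj i M) : de (ae H i M) i M = H := by
  ext a b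
  have h2 : ¬ H.Adj M i := fun h' => h h'.symm
  simp only [ae, de]
  constructor
  · tauto
  · intro h3
    refine ⟨Or.inl h3, ?_⟩
    rintro (⟨rfl, rfl⟩ | ⟨rfl, rfl⟩) <;> tauto

lemma indeg_ae {H : SimpleGraph (Fin d)} {i M : Fin d} (hi : i < M) (h : ¬ H.Adj i M) :
    indeg (ae H i M) M = indeg H M + 1 := by
  unfold indeg
  rw [← Set.ncard_insert_of_notMem (a := i) (s := {x | x < M ∧ H.Adj x M}) (by simp [h])]
  congr 1
  ext x
  have := hi.ne
  simp only [ae, Set.mem_ofPred_eq, Set.mem_insert_iff]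
  constructor
  · rintro ⟨h1, h2 | ⟨_, ⟨rfl, _⟩ | ⟨rfl, rfl⟩⟩⟩ <;> tauto
  · rintro (rfl | h1) <;> tauto

lemma indeg_ae_ne {H : SimpleGraph (Fin d)} {i M j : Fin d} (hi : i < M) (hj : j ≠ M) :
    indeg (ae H i M) j = indeg H j := by
  unfold indeg
  congr 1
  ext x
  simp only [ae, Set.mem_ofPred_eq]
  constructor
  · rintro ⟨h1, h2 | ⟨_, ⟨rfl, rfl⟩ | ⟨rfl, rfl⟩⟩⟩
    · exact ⟨h1, h2⟩
    · exact absurd rfl hj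
    · exact absurd h1 (not_lt.mpr hi.le)
  · tauto

lemma edge_ae {H : SimpleGraph (Fin d)} {i M : Fin d} (hi : i < M) (h : ¬ H.Adj i M) :
    (ae H i M).edgeSet.ncard = H.edgeSet.ncard + 1 := by
  rw [← Set.ncard_insert_of_notMem (a := s(i, M)) (s := H.edgeSet) (by simpa using h)]
  congr 1
  ext x
  induction x with | _ a b =>
  have := hi.ne
  simp only [ae, SimpleGraph.mem_edgeSet, Set.mem_insert_iff, Sym2.eq_iff]
  tauto

lemma gw_ae {H : SimpleGraph (Fin d)} {i M : Fin d} (hi : i < M) (h : ¬ H.Adj i M) :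
    graphWeight (ae H i M) = (indeg H M + 1) * graphWeight H := by
  unfold graphWeight
  rw [← Finset.mul_prod_erase _ _ (Finset.mem_univ M), indeg_ae hi h,
    ← Finset.mul_prod_erase _ (fun j => (indeg H j).factorial) (Finset.mem_univ M),
    Nat.factorial_succ, mul_assoc]
  congr 2
  apply Finset.prod_congr rfl
  intro j hj
  rw [indeg_ae_ne hi (Finset.ne_of_mem_erase hj)]

lemma wt_ae {H : SimpleGraph (Fin d)} {i M : Fin d} (hi : i < M) (h : ¬ H.Adj i M) :
    wt (ae H i M) = C ((indeg (ae H i M) M : ℕ) : ℤ) * (X * wt H) := by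
  unfold wt
  rw [gw_ae hi h, edge_ae hi h, indeg_ae hi h]
  push_cast
  simp only [map_mul]
  ring

noncomputable def N (G : SimpleGraph (Fin d)) (M : Fin d) : Finset (Fin d) :=
  Finset.univ.filter (fun i => i < M ∧ G.Adj i M)

lemma mem_N {G : SimpleGraph (Fin d)} {M i : Fin d} : i ∈ N G M ↔ i < M ∧ G.Adj i M := by
  simp [N]

lemma card_N (G : SimpleGraph (Fin d)) (M : Fin d) : (N G M).card = indeg G M := by
  unfold indeg
  rw [← Set.ncard_coe_finset]
  congr 1
  ext x
  simp [N]

lemma not_adj_de {G : SimpleGraph (Fin d)} {i M : Fin d} : ¬ (de G i M).Adj i M := by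
  simp [de]

lemma step1 (g : ℕ → ℤ) (G : SimpleGraph (Fin d)) (M : Fin d) (h0 : indeg G M ≠ 0) :
    wt G * C (g (indeg G M)) =
      ∑ i ∈ N G M, X * (wt (de G i M) * C (g (indeg (de G i M) M + 1))) := by
  have hk : (C ((indeg G M : ℕ) : ℤ)) ≠ 0 := by
    simpa using h0
  apply mul_left_cancel₀ hk
  rw [Finset.mul_sum]
  have : ∀ i ∈ N G M, C ((indeg G M : ℕ) : ℤ) *
      (X * (wt (de G i M) * C (g (indeg (de G i M) M + 1)))) = wt G * C (g (indeg G M)) := by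
    intro i hi
    rw [mem_N] at hi
    have e := ae_de hi.2
    have h1 := wt_ae hi.1 (not_adj_de (G := G) (i := i) (M := M))
    have h2 := indeg_ae hi.1 (not_adj_de (G := G) (i := i) (M := M))
    rw [e] at h1 h2
    rw [← h2, h1]
    ring
  rw [Finset.sum_congr rfl this, Finset.sum_const, card_N]
  simp

noncomputable def Y (S : Finset (Fin d)) (M : Fin d) : Finset (SimpleGraph (Fin d) × Fin d) :=
  Finset.univ.filter (fun p => p.2 < M ∧ ¬ p.1.Adj p.2 M ∧ ae p.1 p.2 M ∈ K S)

lemma mem_Y {S : Finset (Fin d)} {M : Fin d} {p : SimpleGraph (Fin d) × Fin d} :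
    p ∈ Y S M ↔ p.2 < M ∧ ¬ p.1.Adj p.2 M ∧ Kp S (ae p.1 p.2 M) := by
  simp [Y, mem_K]

attribute [irreducible] Y

lemma step2 {R : Type*} [AddCommMonoid R] (S : Finset (Fin d)) (M : Fin d)
    (F : SimpleGraph (Fin d) → R) :
    ∑ G ∈ K S, ∑ i ∈ N G M, F (de G i M) = ∑ p ∈ Y S M, F p.1 := by
  rw [Finset.sum_sigma']
  refine Finset.sum_bij' (fun p _ => (de p.1 p.2 M, p.2)) (fun p _ => ⟨ae p.1 p.2 M, p.2⟩)
    ?_ ?_ ?_ ?_ ?_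
  · rintro ⟨G, i⟩ h
    simp only [Finset.mem_sigma, mem_N] at h
    simp only [mem_Y, Finset.mem_filter, Finset.mem_univ, true_and]
    exact ⟨h.2.1, not_adj_de, by rw [ae_de h.2.2]; exact mem_K.1 h.1⟩
  · rintro ⟨H, i⟩ h
    simp only [mem_Y, Finset.mem_filter, Finset.mem_univ, true_and] at h
    simp only [Finset.mem_sigma, mem_N]
    exact ⟨mem_K.2 h.2.2, h.1, Or.inr ⟨h.1.ne, Or.inl ⟨rfl, rfl⟩⟩⟩
  · rintro ⟨G, i⟩ h
    simp only [Finset.mem_sigma, mem_N] at h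
    simp [ae_de h.2.2]
  · rintro ⟨H, i⟩ h
    simp only [mem_Y, Finset.mem_filter, Finset.mem_univ, true_and] at h
    simp [de_ae h.2.1]
  · rintro ⟨G, i⟩ h
    rfl

lemma reach_mono {G H : SimpleGraph (Fin d)} (h : ∀ a b, H.Adj a b → G.Adj a b) {a b : Fin d}
    (r : H.Reachable a b) : G.Reachable a b :=
  r.mono (fun a b => h a b)

lemma reach_closed {H : SimpleGraph (Fin d)} {P : Fin d → Prop}
    (hP : ∀ a b, H.Adj a b → P a → P b) {v w : Fin d} (r : H.Reachable v w) (hv : P v) : P w := by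
  rw [SimpleGraph.reachable_iff_reflTransGen] at r
  induction r with
  | refl => exact hv
  | tail _ h ih => exact hP _ _ h ih

lemma reach_re {H : SimpleGraph (Fin d)} {A : Finset (Fin d)}
    (hP : ∀ a b, H.Adj a b → a ∈ A → b ∈ A) {v w : Fin d} (r : H.Reachable v w) (hv : v ∈ A) :
    (re H A).Reachable v w := by
  have : w ∈ A ∧ (re H A).Reachable v w := by
    refine reach_closed (H := H) (P := fun w => w ∈ A ∧ (re H A).Reachable v w) ?_ r
      ⟨hv, SimpleGraph.Reachable.refl _⟩
    rintro a b hab ⟨ha, hr⟩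
    have hb := hP a b hab ha
    exact ⟨hb, hr.trans (SimpleGraph.Adj.reachable (show (re H A).Adj a b from ⟨hab, ha, hb⟩))⟩
  exact this.2

lemma Kp.right {S : Finset (Fin d)} {G : SimpleGraph (Fin d)} (h : Kp S G) {a b : Fin d}
    (hab : G.Adj a b) : b ∈ S := h.1 _ _ hab.symm

lemma ae_Kp {S : Finset (Fin d)} {H : SimpleGraph (Fin d)} {i M : Fin d} (hH : Kp S H)
    (hi : i ∈ S) (hM : M ∈ S) : Kp S (ae H i M) := by
  refine ⟨?_, fun a ha b hb => reach_mono (fun _ _ h => Or.inl h) (hH.2 a ha b hb)⟩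
  rintro a b (h | ⟨_, ⟨rfl, rfl⟩ | ⟨rfl, rfl⟩⟩)
  · exact hH.1 _ _ h
  · exact hi
  · exact hM

lemma step3 (S : Finset (Fin d)) (M : Fin d) (hM : M ∈ S) (hmax : ∀ x ∈ S, x ≤ M)
    (F : SimpleGraph (Fin d) → ℤ[X]) :
    ∑ p ∈ (Y S M).filter (fun p => Kp S p.1), F p.1 =
      ∑ H ∈ K S, C ((S.card : ℤ) - 1 - indeg H M) * F H := by
  have : (Y S M).filter (fun p => Kp S p.1) =
      ((K S) ×ˢ Finset.univ).filter (fun p => p.2 ∈ (S.erase M) \ N p.1 M) := by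
    ext ⟨H, i⟩
    simp only [mem_Y, Finset.mem_filter, Finset.mem_univ, true_and, Finset.mem_product, mem_N,
      Finset.mem_sdiff, Finset.mem_erase, and_true, mem_K]
    constructor
    · rintro ⟨⟨h1, h2, h3⟩, h4⟩
      refine ⟨h4, ⟨h1.ne, ?_⟩, by tauto⟩
      exact h3.1 i M (Or.inr ⟨h1.ne, Or.inl ⟨rfl, rfl⟩⟩)
    · rintro ⟨h1, ⟨h2, h3⟩, h4⟩
      have hi : i < M := lt_of_le_of_ne (hmax i h3) h2
      exact ⟨⟨hi, by tauto, ae_Kp h1 h3 hM⟩, h1⟩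
  rw [this, Finset.sum_filter, Finset.sum_product]
  apply Finset.sum_congr rfl
  intro H hH
  rw [← Finset.sum_filter]
  simp only [Finset.filter_mem_eq_inter, Finset.univ_inter, Finset.sum_const]
  have hsub : N H M ⊆ S.erase M := by
    intro i hi
    rw [mem_N] at hi
    exact Finset.mem_erase.2 ⟨hi.1.ne, (mem_K.1 hH).1 _ _ hi.2⟩
  have hc := Finset.card_sdiff_add_card_eq_card hsub
  rw [card_N, Finset.card_erase_of_mem hM] at hc
  have hpos := Finset.card_pos.2 ⟨M, hM⟩
  have : ((S.card : ℤ) - 1 - indeg H M) = ((S.erase M \ N H M).card : ℤ) := by omega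
  rw [this]
  simp

lemma Kp_sup_cross {S A : Finset (Fin d)} {H1 H2 : SimpleGraph (Fin d)}
    (h1 : Kp A H1) (h2 : Kp (S \ A) H2) :
    ∀ a b, (H1 ⊔ H2).Adj a b → a ∈ A → b ∈ A := by
  rintro a b (h | h) ha
  · exact h1.right h
  · have := h2.1 _ _ h
    simp at this
    tauto

lemma re_sup_left {S A : Finset (Fin d)} {H1 H2 : SimpleGraph (Fin d)}
    (h1 : Kp A H1) (h2 : Kp (S \ A) H2) : re (H1 ⊔ H2) A = H1 := by
  ext a b
  simp only [re, SimpleGraph.sup_adj]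
  constructor
  · rintro ⟨h | h, ha, hb⟩
    · exact h
    · have := h2.1 _ _ h
      simp at this
      tauto
  · intro h
    exact ⟨Or.inl h, h1.1 _ _ h, h1.right h⟩

lemma re_sup_right {S A : Finset (Fin d)} {H1 H2 : SimpleGraph (Fin d)}
    (h1 : Kp A H1) (h2 : Kp (S \ A) H2) : re (H1 ⊔ H2) (S \ A) = H2 := by
  ext a b
  simp only [re, SimpleGraph.sup_adj]
  constructor
  · rintro ⟨h | h, ha, hb⟩
    · have := h1.1 _ _ h
      simp at ha
      tauto
    · exact h
  · intro h
    exact ⟨Or.inr h, h2.1 _ _ h, h2.right h⟩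

lemma step4 {R : Type*} [AddCommMonoid R] (S : Finset (Fin d)) (M : Fin d) (hM : M ∈ S)
    (hmax : ∀ x ∈ S, x ≤ M) (F : SimpleGraph (Fin d) → R) :
    ∑ p ∈ (Y S M).filter (fun p => ¬ Kp S p.1), F p.1 =
      ∑ A ∈ (S.erase M).powerset, ∑ _i ∈ A, ∑ H1 ∈ K A, ∑ H2 ∈ K (S \ A), F (H1 ⊔ H2) := by
  have hr : ∀ A ∈ (S.erase M).powerset, ∑ _i ∈ A, ∑ H1 ∈ K A, ∑ H2 ∈ K (S \ A), F (H1 ⊔ H2)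
      = ∑ q ∈ A ×ˢ (K A ×ˢ K (S \ A)), F (q.2.1 ⊔ q.2.2) := by
    intro A _
    rw [Finset.sum_product]
    simp only [Finset.sum_product]
  rw [Finset.sum_congr rfl hr, Finset.sum_sigma']
  symm
  refine Finset.sum_bij' (fun q _ => (q.2.2.1 ⊔ q.2.2.2, q.2.1))
    (fun p _ => ⟨Finset.univ.filter (fun v => p.1.Reachable v p.2), p.2,
      re p.1 (Finset.univ.filter (fun v => p.1.Reachable v p.2)),
      re p.1 (S \ Finset.univ.filter (fun v => p.1.Reachable v p.2))⟩) ?_ ?_ ?_ ?_ ?_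
  · rintro ⟨A, i, H1, H2⟩ h
    simp only [Finset.mem_sigma, Finset.mem_powerset, Finset.mem_product, mem_K] at h
    obtain ⟨hA, hi, h1, h2⟩ := h
    have hMA : M ∉ A := fun h => by simpa using hA h
    have hAS : ∀ x ∈ A, x ∈ S := fun x hx => (Finset.mem_erase.1 (hA hx)).2
    have hiM : i < M := lt_of_le_of_ne (hmax i (hAS i hi)) (fun h => hMA (h ▸ hi))
    have hc := Kp_sup_cross h1 h2
    simp only [mem_Y, Finset.mem_filter, Finset.mem_univ, true_and, mem_K]
    refine ⟨⟨hiM, fun h => hMA (hc _ _ h hi), ?_, ?_⟩, ?_⟩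
    · rintro a b ((h | h) | ⟨_, ⟨rfl, rfl⟩ | ⟨rfl, rfl⟩⟩)
      · exact hAS _ (h1.1 _ _ h)
      · exact (Finset.mem_sdiff.1 (h2.1 _ _ h)).1
      · exact hAS _ hi
      · exact hM
    · have key : ∀ a ∈ S, (ae (H1 ⊔ H2) i M).Reachable a M := by
        intro a ha
        by_cases haA : a ∈ A
        · refine (reach_mono (fun _ _ h => Or.inl (Or.inl h)) (h1.2 a haA i hi)).trans ?_
          exact SimpleGraph.Adj.reachable (Or.inr ⟨hiM.ne, Or.inl ⟨rfl, rfl⟩⟩)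
        · exact (reach_mono (fun _ _ h => Or.inl (Or.inr h))
            (h2.2 a (Finset.mem_sdiff.2 ⟨ha, haA⟩) M (Finset.mem_sdiff.2 ⟨hM, hMA⟩)))
      intro a ha b hb
      exact (key a ha).trans (key b hb).symm
    · intro hk
      exact hMA (reach_closed hc (hk.2 i (hAS i hi) M hM) hi)
  · rintro ⟨H, i⟩ h
    simp only [mem_Y, Finset.mem_filter, Finset.mem_univ, true_and, mem_K] at h
    obtain ⟨⟨hiM, hn, hK⟩, hnK⟩ := h
    set A := Finset.univ.filter (fun v => H.Reachable v i) with hAdef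
    have memA : ∀ v, v ∈ A ↔ H.Reachable v i := by simp [hAdef]
    have hi : i ∈ S := hK.1 i M (Or.inr ⟨hiM.ne, Or.inl ⟨rfl, rfl⟩⟩)
    have hcov : ∀ v ∈ S, H.Reachable v i ∨ H.Reachable v M := by
      intro v hv
      refine reach_closed (P := fun v => H.Reachable v i ∨ H.Reachable v M) ?_ (hK.2 M hM v hv)
        (Or.inr (SimpleGraph.Reachable.refl _))
      rintro a b (h | ⟨_, ⟨rfl, rfl⟩ | ⟨rfl, rfl⟩⟩) ha
      · rcases ha with ha | ha
        · exact Or.inl (h.symm.reachable.trans ha)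
        · exact Or.inr (h.symm.reachable.trans ha)
      · exact Or.inr (SimpleGraph.Reachable.refl _)
      · exact Or.inl (SimpleGraph.Reachable.refl _)
    have hHS : ∀ a b, H.Adj a b → a ∈ S := fun a b h => hK.1 a b (Or.inl h)
    have hMA : M ∉ A := by
      intro hMA
      rw [memA] at hMA
      apply hnK
      refine ⟨hHS, ?_⟩
      have : ∀ a ∈ S, H.Reachable a i := fun a ha => (hcov a ha).elim id (fun h => h.trans hMA)
      exact fun a ha b hb => (this a ha).trans (this b hb).symm
    have hcl : ∀ a b, H.Adj a b → a ∈ A → b ∈ A := by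
      intro a b h ha
      rw [memA] at ha ⊢
      exact h.symm.reachable.trans ha
    have hAS : ∀ a ∈ A, a ∈ S := by
      intro a ha
      rw [memA] at ha
      exact reach_closed (P := fun v => v ∈ S) (fun a b h _ => hHS _ _ h.symm) ha.symm hi
    have hclB : ∀ a b, H.Adj a b → a ∈ S \ A → b ∈ S \ A := by
      intro a b h ha
      rw [Finset.mem_sdiff] at ha ⊢
      exact ⟨hHS _ _ h.symm, fun hb => ha.2 (hcl _ _ h.symm hb)⟩
    simp only [Finset.mem_sigma, Finset.mem_powerset, Finset.mem_product, mem_K]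
    refine ⟨?_, (memA i).2 (SimpleGraph.Reachable.refl _), ⟨fun a b h => h.2.1, ?_⟩,
      ⟨fun a b h => h.2.1, ?_⟩⟩
    · intro a ha
      exact Finset.mem_erase.2 ⟨fun h => hMA (h ▸ ha), hAS a ha⟩
    · intro a ha b hb
      exact reach_re hcl (((memA a).1 ha).trans ((memA b).1 hb).symm) ha
    · intro a ha b hb
      have : ∀ a ∈ S \ A, H.Reachable a M := by
        intro a ha
        rw [Finset.mem_sdiff, memA] at ha
        exact (hcov a ha.1).resolve_left ha.2
      exact reach_re hclB ((this a ha).trans (this b hb).symm) ha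
  · rintro ⟨A, i, H1, H2⟩ h
    simp only [Finset.mem_sigma, Finset.mem_powerset, Finset.mem_product, mem_K] at h
    obtain ⟨hA, hi, h1, h2⟩ := h
    have hc := Kp_sup_cross h1 h2
    have e : Finset.univ.filter (fun v => (H1 ⊔ H2).Reachable v i) = A := by
      ext v
      simp only [Finset.mem_filter, Finset.mem_univ, true_and]
      constructor
      · intro h
        exact reach_closed hc h.symm hi
      · intro h
        exact reach_mono (fun _ _ h => Or.inl h) (h1.2 v h i hi)
    simp only [e, re_sup_left h1 h2, re_sup_right h1 h2]
  · rintro ⟨H, i⟩ h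
    simp only [mem_Y, Finset.mem_filter, Finset.mem_univ, true_and, mem_K] at h
    obtain ⟨⟨hiM, hn, hK⟩, hnK⟩ := h
    have hHS : ∀ a b, H.Adj a b → a ∈ S := fun a b h => hK.1 a b (Or.inl h)
    simp only [Prod.mk.injEq, and_true]
    ext a b
    simp only [re, SimpleGraph.sup_adj, Finset.mem_filter, Finset.mem_univ, true_and,
      Finset.mem_sdiff]
    constructor
    · tauto
    · intro h
      have ha := hHS _ _ h
      have hb := hHS _ _ h.symm
      by_cases hr : H.Reachable a i
      · exact Or.inl ⟨h, hr, h.symm.reachable.trans hr⟩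
      · exact Or.inr ⟨h, ⟨ha, hr⟩, ⟨hb, fun h' => hr (h.reachable.trans h')⟩⟩
  · rintro ⟨A, i, H1, H2⟩ h
    rfl

lemma indeg_eq_zero {A : Finset (Fin d)} {H : SimpleGraph (Fin d)} (h : Kp A H) {j : Fin d}
    (hj : j ∉ A) : indeg H j = 0 := by
  unfold indeg
  rw [Set.ncard_eq_zero]
  ext x
  simp only [Set.mem_ofPred_eq, Set.mem_empty_iff_false, iff_false]
  rintro ⟨_, h'⟩
  exact hj (h.right h')

lemma indeg_sup {S A : Finset (Fin d)} {H1 H2 : SimpleGraph (Fin d)}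
    (h1 : Kp A H1) (h2 : Kp (S \ A) H2) (j : Fin d) :
    (indeg (H1 ⊔ H2) j = indeg H1 j ∧ indeg H2 j = 0) ∨
    (indeg (H1 ⊔ H2) j = indeg H2 j ∧ indeg H1 j = 0 ∧ j ∉ A) := by
  by_cases hj : j ∈ A
  · left
    have hjj : j ∉ S \ A := by simp [hj]
    refine ⟨?_, indeg_eq_zero h2 hjj⟩
    unfold indeg
    congr 1
    ext x
    simp only [Set.mem_ofPred_eq, SimpleGraph.sup_adj]
    have : ¬ H2.Adj x j := fun h => hjj (h2.right h)
    tauto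
  · right
    refine ⟨?_, indeg_eq_zero h1 hj, hj⟩
    unfold indeg
    congr 1
    ext x
    simp only [Set.mem_ofPred_eq, SimpleGraph.sup_adj]
    have : ¬ H1.Adj x j := fun h => hj (h1.right h)
    tauto

lemma wt_sup {S A : Finset (Fin d)} {H1 H2 : SimpleGraph (Fin d)}
    (h1 : Kp A H1) (h2 : Kp (S \ A) H2) : wt (H1 ⊔ H2) = wt H1 * wt H2 := by
  have hg : graphWeight (H1 ⊔ H2) = graphWeight H1 * graphWeight H2 := by
    unfold graphWeight
    rw [← Finset.prod_mul_distrib]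
    apply Finset.prod_congr rfl
    intro j _
    rcases indeg_sup h1 h2 j with ⟨e, e'⟩ | ⟨e, e', _⟩ <;> simp [e, e']
  have he : (H1 ⊔ H2).edgeSet.ncard = H1.edgeSet.ncard + H2.edgeSet.ncard := by
    rw [SimpleGraph.edgeSet_sup, Set.ncard_union_eq]
    rw [Set.disjoint_left]
    intro x
    induction x with | _ a b =>
    intro ha hb
    have := h1.1 _ _ ha
    have := h2.1 _ _ hb
    simp at this
    tauto
  unfold wt
  rw [hg, he]
  push_cast
  simp only [map_mul]
  ring

theorem recur (S : Finset (Fin d)) (M : Fin d) (hM : M ∈ S) (hmax : ∀ x ∈ S, x ≤ M)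
    (hS : 2 ≤ S.card) (g : ℕ → ℤ) :
    Wg g S M = X * (∑ H ∈ K S, C ((S.card : ℤ) - 1 - indeg H M) * (wt H * C (g (indeg H M + 1))) +
      ∑ A ∈ (S.erase M).powerset, C (A.card : ℤ) *
        (W A * Wg (fun k => g (k + 1)) (S \ A) M)) := by
  rw [Wg]
  have h1 : ∀ G ∈ K S, wt G * C (g (indeg G M)) =
      ∑ i ∈ N G M, X * (wt (de G i M) * C (g (indeg (de G i M) M + 1))) := by
    intro G hG
    apply step1
    rw [mem_K] at hG
    obtain ⟨x, hx, hxM⟩ := Finset.exists_mem_ne (by omega : 1 < S.card) M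
    rw [← card_N]
    intro h0
    rw [Finset.card_eq_zero] at h0
    have : x = M := by
      refine reach_closed (P := fun v => v = M) ?_ (hG.2 M hM x hx) rfl
      rintro a b hab rfl
      exfalso
      have hb := hG.right hab
      have : b ∈ N G a := mem_N.2 ⟨lt_of_le_of_ne (hmax b hb) hab.ne', hab.symm⟩
      rw [h0] at this
      simp at this
    exact hxM this
  rw [Finset.sum_congr rfl h1,
    step2 S M (fun H => X * (wt H * C (g (indeg H M + 1)))), ← Finset.mul_sum,
    ← Finset.sum_filter_add_sum_filter_not (Y S M) (fun p => Kp S p.1),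
    step3 S M hM hmax (fun H => wt H * C (g (indeg H M + 1))),
    step4 S M hM hmax (fun H => wt H * C (g (indeg H M + 1)))]
  refine congrArg (fun z => X * (_ + z)) ?_
  apply Finset.sum_congr rfl
  intro A hA
  rw [Finset.mem_powerset] at hA
  have hMA : M ∉ A := fun h => by simpa using hA h
  rw [Finset.sum_const, W, Wg, Finset.sum_mul_sum]
  simp only [nsmul_eq_mul, map_natCast]
  congr 1
  apply Finset.sum_congr rfl
  intro H1 h1
  apply Finset.sum_congr rfl
  intro H2 h2
  rw [mem_K] at h1 h2
  rw [wt_sup h1 h2]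
  have : indeg (H1 ⊔ H2) M = indeg H2 M := by
    rcases indeg_sup h1 h2 M with ⟨e, e'⟩ | ⟨e, e', _⟩
    · rw [e, e', indeg_eq_zero h1 hMA]
    · exact e
  rw [this]
  ring


lemma comb (T : Finset (Fin d)) (N : ℕ) (hT : T.card = N + 1) (f h : ℕ → ℤ) :
    ∑ A ∈ T.powerset, (A.card : ℤ) * (((A.card - 1).factorial * f (A.card - 1)) *
      ((N + 1 - A.card).factorial * h (N + 1 - A.card))) =
    (N + 1).factorial * ∑ p ∈ Finset.HasAntidiagonal.antidiagonal N, f p.1 * h p.2 := by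
  rw [Finset.sum_powerset_apply_card (fun a => (a : ℤ) * (((a - 1).factorial * f (a - 1)) *
      ((N + 1 - a).factorial * h (N + 1 - a)))), hT, Finset.sum_range_succ',
    Finset.Nat.sum_antidiagonal_eq_sum_range_succ_mk, Finset.mul_sum]
  simp only [Nat.cast_zero, zero_mul, smul_zero, add_zero]
  apply Finset.sum_congr rfl
  intro a ha
  have ha : a ≤ N := by simpa [Nat.lt_succ_iff] using ha
  have e : N + 1 - (a + 1) = N - a := by omega
  have := Nat.choose_mul_factorial_mul_factorial (show a + 1 ≤ N + 1 by omega)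
  rw [e, Nat.factorial_succ a] at this
  rw [← this, e]
  simp only [Nat.add_sub_cancel, nsmul_eq_mul]
  push_cast
  ring

section conv

lemma conv0 {p q : ℤ[X]} {a b m : ℕ} (hp : ∀ i < a, p.coeff i = 0) (hq : ∀ i < b, q.coeff i = 0)
    (hm : m < a + b) : (p * q).coeff m = 0 := by
  obtain ⟨p', rfl⟩ := X_pow_dvd_iff.2 hp
  obtain ⟨q', rfl⟩ := X_pow_dvd_iff.2 hq
  rw [show X ^ a * p' * (X ^ b * q') = X ^ (a + b) * (p' * q') by ring, coeff_X_pow_mul', if_neg]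
  omega

lemma conv1 {p q : ℤ[X]} {a b : ℕ} (hp : ∀ i < a, p.coeff i = 0) (hq : ∀ i < b, q.coeff i = 0) :
    (p * q).coeff (a + b) = p.coeff a * q.coeff b := by
  obtain ⟨p', rfl⟩ := X_pow_dvd_iff.2 hp
  obtain ⟨q', rfl⟩ := X_pow_dvd_iff.2 hq
  rw [show X ^ a * p' * (X ^ b * q') = X ^ (a + b) * (p' * q') by ring]
  simp [coeff_X_pow_mul', mul_coeff_zero]

lemma conv2 {p q : ℤ[X]} {a b : ℕ} (hp : ∀ i < a, p.coeff i = 0) (hq : ∀ i < b, q.coeff i = 0) :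
    (p * q).coeff (a + b + 1) = p.coeff a * q.coeff (b + 1) + p.coeff (a + 1) * q.coeff b := by
  obtain ⟨p', rfl⟩ := X_pow_dvd_iff.2 hp
  obtain ⟨q', rfl⟩ := X_pow_dvd_iff.2 hq
  rw [show X ^ a * p' * (X ^ b * q') = X ^ (a + b) * (p' * q') by ring]
  have e : a + b + 1 = 1 + (a + b) := by ring
  have e1 : a + 1 = 1 + a := by ring
  have e2 : b + 1 = 1 + b := by ring
  rw [e, e1, e2, coeff_X_pow_mul, coeff_X_pow_mul, coeff_X_pow_mul, mul_coeff_one]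
  simp [coeff_X_pow_mul']

end conv

lemma W_eq (S : Finset (Fin d)) (M : Fin d) : W S = Wg (fun _ => 1) S M := by
  simp [W, Wg]

lemma low (n : ℕ) : ∀ (S : Finset (Fin d)) (M : Fin d), S.card = n + 1 → M ∈ S →
    (∀ x ∈ S, x ≤ M) → ∀ m < n, ∀ g, (Wg g S M).coeff m = 0 := by
  induction n using Nat.strong_induction_on with | _ n ihn =>
  intro S M hc hM hmax m
  induction m with
  | zero =>
    intro hm g
    rw [recur S M hM hmax (by omega) g]
    simp
  | succ m ihm =>
    intro hm g
    rw [recur S M hM hmax (by omega) g, coeff_X_mul, coeff_add]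
    have h1 := ihm (by omega) (fun k => ((S.card : ℤ) - 1 - k) * g (k + 1))
    have h2 : Wg (fun k => ((S.card : ℤ) - 1 - k) * g (k + 1)) S M =
        ∑ H ∈ K S, C ((S.card : ℤ) - 1 - indeg H M) * (wt H * C (g (indeg H M + 1))) := by
      unfold Wg
      apply Finset.sum_congr rfl
      intro H _
      rw [C_mul]
      ring
    rw [← h2, h1, zero_add, finsetSum_coeff]
    apply Finset.sum_eq_zero
    intro A hA
    rw [Finset.mem_powerset] at hA
    rcases A.eq_empty_or_nonempty with rfl | hne
    · simp
    have hAS : A ⊆ S := hA.trans (Finset.erase_subset _ _)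
    have hMA : M ∉ A := fun h => by simpa using hA h
    have hc1 := Finset.card_sdiff_add_card_eq_card hAS
    have hc2 := Finset.card_pos.2 hne
    have hc3 := Finset.card_le_card hA
    rw [Finset.card_erase_of_mem hM] at hc3
    rw [coeff_C_mul]
    rw [conv0 (a := A.card - 1) (b := (S \ A).card - 1), mul_zero]
    · intro i hi
      rw [W_eq A (A.max' hne)]
      exact ihn (A.card - 1) (by omega) A _ (by omega) (A.max'_mem hne)
        (fun x hx => A.le_max' x hx) i hi _
    · intro i hi
      exact ihn ((S \ A).card - 1) (by omega) (S \ A) M (by omega)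
        (Finset.mem_sdiff.2 ⟨hM, hMA⟩) (fun x hx => hmax x (Finset.mem_sdiff.1 hx).1) i hi _
    · omega

lemma K_single (M : Fin d) : K ({M} : Finset (Fin d)) = {⊥} := by
  ext G
  rw [mem_K, Finset.mem_singleton]
  constructor
  · intro h
    ext a b
    simp only [SimpleGraph.bot_adj, iff_false]
    intro hab
    have h1 := h.1 _ _ hab
    have h2 := h.right hab
    simp only [Finset.mem_singleton] at h1 h2
    exact hab.ne (h1.trans h2.symm)
  · rintro rfl
    refine ⟨fun a b h => absurd h (by simp), ?_⟩
    intro a ha b hb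
    simp only [Finset.mem_singleton] at ha hb
    subst ha hb
    exact SimpleGraph.Reachable.refl _

lemma indeg_bot (j : Fin d) : indeg (⊥ : SimpleGraph (Fin d)) j = 0 := by
  simp [indeg]

lemma Wg_single (g : ℕ → ℤ) (M : Fin d) : Wg g {M} M = C (g 0) := by
  simp [Wg, K_single, wt, graphWeight, indeg_bot]

def Good (n : ℕ) (S : Finset (Fin d)) (M : Fin d) : Prop :=
  (W S).coeff n = n.factorial * catalan n ∧
  (Wg (fun k => (k : ℤ)) S M).coeff n = n.factorial * (catalan (n + 1) - catalan n : ℤ) ∧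
  (W S).coeff (n + 1) = n.factorial * V n

set_option maxHeartbeats 1000000 in
lemma main (n : ℕ) : ∀ (S : Finset (Fin d)) (M : Fin d), S.card = n + 1 → M ∈ S →
    (∀ x ∈ S, x ≤ M) → Good n S M := by
  induction n using Nat.strong_induction_on with | _ n ihn =>
  intro S M hc hM hmax
  rcases n with _ | N
  · obtain ⟨x, rfl⟩ := Finset.card_eq_one.1 hc
    obtain rfl : M = x := by simpa using hM
    refine ⟨?_, ?_, ?_⟩
    · rw [W_eq _ M, Wg_single]; simp
    · rw [Wg_single]; simp
    · rw [W_eq _ M, Wg_single]; simp [V, coeff_one]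
  have hT : (S.erase M).card = N + 1 := by
    rw [Finset.card_erase_of_mem hM]; omega
  -- facts on the pieces
  have fA : ∀ A ∈ (S.erase M).powerset, A.Nonempty → ∃ a b, a + b = N ∧ A.card = a + 1 ∧
      (∀ i < a, (W A).coeff i = 0) ∧ (W A).coeff a = a.factorial * catalan a ∧
      (W A).coeff (a + 1) = a.factorial * V a ∧
      (∀ g, ∀ i < b, (Wg g (S \ A) M).coeff i = 0) ∧ Good b (S \ A) M := by
    intro A hA hne
    rw [Finset.mem_powerset] at hA
    have hAS : A ⊆ S := hA.trans (Finset.erase_subset _ _)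
    have hMA : M ∉ A := fun h => by simpa using hA h
    have hc1 := Finset.card_sdiff_add_card_eq_card hAS
    have hc2 := Finset.card_pos.2 hne
    have hc3 := Finset.card_le_card hA
    have hMB : M ∈ S \ A := Finset.mem_sdiff.2 ⟨hM, hMA⟩
    have hmB : ∀ x ∈ S \ A, x ≤ M := fun x hx => hmax x (Finset.mem_sdiff.1 hx).1
    have gA := ihn (A.card - 1) (by omega) A _ (by omega) (A.max'_mem hne)
        (fun x hx => A.le_max' x hx)
    refine ⟨A.card - 1, (S \ A).card - 1, by omega, by omega, ?_, gA.1, gA.2.2, ?_, ?_⟩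
    · intro i hi
      rw [W_eq A (A.max' hne)]
      exact low (A.card - 1) A _ (by omega) (A.max'_mem hne)
        (fun x hx => A.le_max' x hx) i hi _
    · intro g i hi
      exact low ((S \ A).card - 1) (S \ A) M (by omega) hMB hmB i hi _
    · exact ihn ((S \ A).card - 1) (by omega) (S \ A) M (by omega) hMB hmB
  have hlow := low (N + 1) S M hc hM hmax
  -- weight one
  have r1 : W S = X * (C ((N : ℤ) + 1) * W S - Wg (fun k => (k : ℤ)) S M +
      ∑ A ∈ (S.erase M).powerset, C (A.card : ℤ) * (W A * W (S \ A))) := by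
    conv_lhs => rw [W_eq S M, recur S M hM hmax (by omega)]
    simp only [← W_eq]
    refine congrArg (fun z => X * (z + _)) ?_
    rw [W, Wg, Finset.mul_sum, ← Finset.sum_sub_distrib]
    apply Finset.sum_congr rfl
    intro H _
    rw [hc]
    push_cast
    simp only [map_sub, map_add, map_one]
    ring
  have r2 : Wg (fun k => (k : ℤ)) S M =
      X * (Wg (fun k => ((N : ℤ) + 1 - k) * (k + 1)) S M +
      ∑ A ∈ (S.erase M).powerset, C (A.card : ℤ) *
        (W A * (Wg (fun k => (k : ℤ)) (S \ A) M + W (S \ A)))) := by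
    conv_lhs => rw [recur S M hM hmax (by omega)]
    refine congrArg₂ (fun y z => X * (y + z)) ?_ ?_
    · rw [Wg]
      apply Finset.sum_congr rfl
      intro H _
      rw [hc]
      push_cast
      simp only [map_sub, map_add, map_one, map_mul]
      ring
    · apply Finset.sum_congr rfl
      intro A _
      refine congrArg (fun z => C (A.card : ℤ) * (W A * z)) ?_
      rw [W, Wg, Wg, ← Finset.sum_add_distrib]
      apply Finset.sum_congr rfl
      intro H _
      push_cast
      simp only [map_add, map_one]
      ring
  have z1 : (W S).coeff N = 0 := by rw [W_eq S M]; exact hlow N (by omega) _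
  have c1 : (W S).coeff (N + 1) = (N + 1).factorial * catalan (N + 1) := by
    rw [r1, coeff_X_mul, coeff_add, coeff_sub, coeff_C_mul, z1, hlow N (by omega),
      finsetSum_coeff, catalan_succ']
    push_cast
    rw [← comb (S.erase M) N hT (fun i => (catalan i : ℤ)) (fun i => (catalan i : ℤ))]
    simp only [mul_zero, sub_zero, zero_add]
    apply Finset.sum_congr rfl
    intro A hA
    rcases A.eq_empty_or_nonempty with rfl | hne
    · simp
    obtain ⟨a, b, hab, hcard, h1, h2, h3, h4, h5⟩ := fA A hA hne
    have e1 : A.card - 1 = a := by omega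
    have e2 : N + 1 - A.card = b := by omega
    rw [coeff_C_mul, e1, e2, ← hab, conv1 h1 (by rw [W_eq _ M]; exact h4 _), h2, h5.1]
  have c2 : (Wg (fun k => (k : ℤ)) S M).coeff (N + 1) =
      (N + 1).factorial * (catalan (N + 1 + 1) - catalan (N + 1) : ℤ) := by
    have hcat : (catalan (N + 1 + 1) - catalan (N + 1) : ℤ) =
        ∑ p ∈ Finset.HasAntidiagonal.antidiagonal N, (catalan p.1 : ℤ) * catalan (p.2 + 1) := by
      rw [catalan_succ' (N + 1), Finset.Nat.antidiagonal_succ']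
      simp
    rw [r2, coeff_X_mul, coeff_add, hlow N (by omega), finsetSum_coeff, hcat,
      ← comb (S.erase M) N hT (fun i => (catalan i : ℤ)) (fun i => (catalan (i + 1) : ℤ)), zero_add]
    apply Finset.sum_congr rfl
    intro A hA
    rcases A.eq_empty_or_nonempty with rfl | hne
    · simp
    obtain ⟨a, b, hab, hcard, h1, h2, h3, h4, h5⟩ := fA A hA hne
    have e1 : A.card - 1 = a := by omega
    have e2 : N + 1 - A.card = b := by omega
    have h6 : ∀ i < b, (W (S \ A)).coeff i = 0 := by rw [W_eq _ M]; exact h4 _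
    rw [coeff_C_mul, e1, e2, ← hab, conv1 h1 (fun i hi => by rw [coeff_add, h4 _ i hi, h6 i hi, add_zero]),
      h2, coeff_add, h5.1, h5.2.1]
    ring
  refine ⟨c1, c2, ?_⟩
  rw [r1, coeff_X_mul, coeff_add, coeff_sub, coeff_C_mul, c1, c2, finsetSum_coeff, V_succ]
  have : ∑ A ∈ (S.erase M).powerset, (C (A.card : ℤ) * (W A * W (S \ A))).coeff (N + 1) =
      (N + 1).factorial * ∑ p ∈ Finset.HasAntidiagonal.antidiagonal N, (catalan p.1 : ℤ) * V p.2 +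
      (N + 1).factorial * ∑ p ∈ Finset.HasAntidiagonal.antidiagonal N, V p.1 * (catalan p.2 : ℤ) := by
    rw [← comb (S.erase M) N hT (fun i => (catalan i : ℤ)) V,
      ← comb (S.erase M) N hT V (fun i => (catalan i : ℤ)), ← Finset.sum_add_distrib]
    apply Finset.sum_congr rfl
    intro A hA
    rcases A.eq_empty_or_nonempty with rfl | hne
    · simp
    obtain ⟨a, b, hab, hcard, h1, h2, h3, h4, h5⟩ := fA A hA hne
    have e1 : A.card - 1 = a := by omega
    have e2 : N + 1 - A.card = b := by omega
    rw [coeff_C_mul, e1, e2, ← hab, conv2 h1 (by rw [W_eq _ M]; exact h4 _), h2, h3, h5.1, h5.2.2]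
    ring
  have hsw : ∑ p ∈ Finset.HasAntidiagonal.antidiagonal N, V p.1 * (catalan p.2 : ℤ) =
      ∑ p ∈ Finset.HasAntidiagonal.antidiagonal N, (catalan p.1 : ℤ) * V p.2 := by
    rw [← Finset.Nat.sum_antidiagonal_swap]
    apply Finset.sum_congr rfl
    intro p _
    simp [mul_comm]
  rw [this, hsw]
  ring

end UC

end helpers

theorem weighted_unicyclic_count (d : ℕ) (hd : 3 ≤ d) :
    ∑ᶠ G ∈ {G : SimpleGraph (Fin d) | G.Connected ∧ G.edgeSet.ncard = d}, graphWeight G =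
      (∑ i ∈ Finset.range (d - 2), Nat.choose (2 * d - 1) i) * (d - 1).factorial := by
  classical
  obtain ⟨n, rfl⟩ : ∃ n, d = n + 1 := ⟨d - 1, by omega⟩
  have h := (UC.main n (Finset.univ : Finset (Fin (n + 1))) (Fin.last n) (by simp) (by simp)
    (fun x _ => Fin.le_last x)).2.2
  have hs : {G : SimpleGraph (Fin (n + 1)) | G.Connected ∧ G.edgeSet.ncard = n + 1} =
      ↑((UC.K (Finset.univ : Finset (Fin (n + 1)))).filter (fun G => G.edgeSet.ncard = n + 1)) := by
    ext G
    simp only [Set.mem_ofPred_eq, Finset.coe_filter, UC.mem_K, UC.Kp, Finset.mem_univ]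
    constructor
    · rintro ⟨h1, h2⟩
      exact ⟨⟨by simp, fun a _ b _ => h1.preconnected a b⟩, h2⟩
    · rintro ⟨h1, h2⟩
      exact ⟨⟨fun a b => h1.2 a trivial b trivial⟩, h2⟩
  rw [hs, finsum_mem_coe_finset]
  zify
  rw [Finset.sum_filter]
  rw [UC.W, Polynomial.finsetSum_coeff] at h
  have e1 : n + 1 - 2 = n - 1 := by omega
  have e2 : 2 * (n + 1) - 1 = 2 * n + 1 := by omega
  rw [e1, e2, Nat.add_sub_cancel]
  rw [UC.V] at h
  rw [mul_comm, ← h]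
  apply Finset.sum_congr rfl
  intro G _
  rw [UC.wt, Polynomial.coeff_C_mul, Polynomial.coeff_X_pow]
  by_cases hG : G.edgeSet.ncard = n + 1
  · simp [hG]
  · have hG' : n + 1 ≠ G.edgeSet.ncard := fun h => hG h.symm
    have hG2 : ¬ ((G.edgeSet.ncard : ℤ) = (n : ℤ) + 1) := by exact_mod_cast hG
    simp [hG', hG2]
end

section
/- Let d ≥ 2 be an integer. Consider multigraphs G on the vertex set {1,…,d} given by an edge-multiplicity function m : {(i,j) : 1 ≤ i < j ≤ d} → ℕ such that the underlying simple graph (the support of m) is a spanning tree of the complete graph on {1,…,d}, exactly one edge has multiplicity 2, and all other edges of the tree have multiplicity 1 (so G has d edges counted with multiplicity, and is connected and spanning). For 2 ≤ j ≤ d let indeg(G,j) = Σ_{i<j} m(i,j), and set w_G = ∏_{j=2}^{d} [ indeg(G,j)! / ∏_{i<j} m(i,j)! ] (the multinomial coefficient of the multiplicities entering j). Then Σ_G w_G = C(2d−1, d−2) · (d−1)!. -/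
/-- A multigraph on `{1,…,d}` given by an edge-multiplicity function
`m : {(i,j) : i < j} → ℕ` (encoded as a function on all pairs, vanishing unless `i < j`)
whose underlying simple graph (the support of `m`) is a spanning tree of the complete
graph, with exactly one edge of multiplicity 2 and all other edges of the tree of
multiplicity 1. -/
def IsDoubledEdgeTree {d : ℕ} (m : Fin d → Fin d → ℕ) : Prop :=
  (∀ i j : Fin d, ¬ i < j → m i j = 0) ∧
  (SimpleGraph.fromRel fun i j => i < j ∧ m i j ≠ 0).IsTree ∧
  (∀ i j : Fin d, i < j → m i j ≠ 0 → m i j = 1 ∨ m i j = 2) ∧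
  {p : Fin d × Fin d | p.1 < p.2 ∧ m p.1 p.2 = 2}.ncard = 1

/-- The weight `w_G = ∏_j [ indeg(G,j)! / ∏_{i<j} m(i,j)! ]` where
`indeg(G,j) = Σ_{i<j} m(i,j)`: a product over vertices of the multinomial coefficients
of the multiplicities of the edges entering each vertex. -/
def multiWeight {d : ℕ} (m : Fin d → Fin d → ℕ) : ℕ :=
  ∏ j : Fin d, Nat.multinomial (Finset.univ.filter (· < j)) (fun i => m i j)

namespace DET

open Finset

/-- `RootAt f v r`: following parents from `v` ends at the root `r`. -/
inductive RootAt {V : Type} (f : V → Option V) : V → V → Prop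
  | base (r : V) (h : f r = none) : RootAt f r r
  | step (v u r : V) (h : f v = some u) (h' : RootAt f u r) : RootAt f v r

def Acyc {V : Type} (f : V → Option V) : Prop := ∀ v, ∃ r, RootAt f v r

theorem RootAt.root {V : Type} {f : V → Option V} {v r : V} (h : RootAt f v r) : f r = none := by
  induction h with
  | base r h => exact h
  | step v u r h h' ih => exact ih

theorem RootAt.unique {V : Type} {f : V → Option V} {v r s : V} (h : RootAt f v r)
    (h2 : RootAt f v s) : r = s := by
  induction h with
  | base r h => cases h2 with
    | base => rfl
    | step _ u _ h' => simp [h] at h'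
  | step v u r h h' ih => cases h2 with
    | base _ h'' => simp [h] at h''
    | step _ u' _ h' h3 =>
      rw [h] at h'; cases h'; exact ih h3

theorem RootAt.no_two {V : Type} {f : V → Option V} {v r : V} (h : RootAt f v r) :
    ∀ u, f v = some u → f u ≠ some v := by
  induction h with
  | base r h => intro u hu; simp [h] at hu
  | step v u r h h' ih =>
    intro u' hu' h2
    rw [h] at hu'; cases hu'
    exact ih v h2 h

theorem RootAt.no_loop {V : Type} {f : V → Option V} {v r : V} (h : RootAt f v r) :
    f v ≠ some v := fun h1 => h.no_two v h1 h1

/-- Two rooted forests with the same roots and the same underlying edges coincide. -/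
theorem eq_of_same_edges {V : Type} {f g : V → Option V} (hg : Acyc g)
    (hr : ∀ v, f v = none ↔ g v = none)
    (he : ∀ i j, (f i = some j ∨ f j = some i) ↔ (g i = some j ∨ g j = some i)) : f = g := by
  have key : ∀ v r, RootAt g v r → f v = g v := by
    intro v r h
    induction h with
    | base r h => rw [h]; exact (hr r).2 h
    | step v u r h h' ih =>
      rw [h]
      rcases (he v u).2 (Or.inl h) with h1 | h1
      · exact h1
      · exfalso
        rw [ih] at h1
        obtain ⟨s, hs⟩ := hg v
        exact hs.no_two u h h1
  funext v
  obtain ⟨r, hr⟩ := hg v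
  exact key v r hr

/-- Add a new largest vertex with child set `C` and parent `p`. -/
def ext {n : ℕ} (f : Fin n → Option (Fin n)) (C : Finset (Fin n)) (p : Option (Fin n)) :
    Fin (n + 1) → Option (Fin (n + 1)) :=
  Fin.lastCases (p.map Fin.castSucc)
    (fun i => if i ∈ C then some (Fin.last n) else (f i).map Fin.castSucc)

section
variable {n : ℕ} {f : Fin n → Option (Fin n)} {C : Finset (Fin n)} {p : Option (Fin n)}

@[simp] theorem ext_last : ext f C p (Fin.last n) = p.map Fin.castSucc := by simp [ext]

@[simp] theorem ext_cs (i : Fin n) : ext f C p i.castSucc =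
    if i ∈ C then some (Fin.last n) else (f i).map Fin.castSucc := by simp [ext]

def roots {n : ℕ} (f : Fin n → Option (Fin n)) : Finset (Fin n) := univ.filter (fun v => f v = none)

theorem ext_cs_eq_cs (hC : C ⊆ roots f) (i j : Fin n) :
    ext f C p i.castSucc = some j.castSucc ↔ f i = some j := by
  have : i ∈ C → f i = none := fun h => by simpa [roots] using hC h
  by_cases h : i ∈ C
  · simp [h, this h, (Fin.castSucc_lt_last j).ne']
  · simp [h]

theorem ext_cs_eq_last (i : Fin n) :
    ext f C p i.castSucc = some (Fin.last n) ↔ i ∈ C := by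
  by_cases h : i ∈ C <;> simp [h, (Fin.castSucc_lt_last _).ne]

theorem ext_cs_eq_none (hC : C ⊆ roots f) (i : Fin n) :
    ext f C p i.castSucc = none ↔ i ∈ roots f \ C := by
  by_cases h : i ∈ C <;> simp [h, roots]

theorem rootAt_ext (hC : C ⊆ roots f) {v r : Fin n} (h : RootAt f v r) (hr : r ∉ C) :
    RootAt (ext f C p) v.castSucc r.castSucc := by
  induction h with
  | base r h => exact RootAt.base _ (by simp [hr, h])
  | step v u r h h' ih => exact RootAt.step _ _ _ ((ext_cs_eq_cs hC _ _).2 h) (ih hr)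

theorem rootAt_ext' (hC : C ⊆ roots f) {v r : Fin n} (h : RootAt f v r) (hr : r ∈ C) {R}
    (hR : RootAt (ext f C p) (Fin.last n) R) :
    RootAt (ext f C p) v.castSucc R := by
  induction h with
  | base r h => exact RootAt.step _ _ _ ((ext_cs_eq_last _).2 hr) hR
  | step v u r h h' ih => exact RootAt.step _ _ _ ((ext_cs_eq_cs hC _ _).2 h) (ih hr)

theorem rootAt_of_ext (hC : C ⊆ roots f) {x R : Fin (n+1)} (h : RootAt (ext f C p) x R) :
    ∀ v : Fin n, x = v.castSucc → ∃ r, RootAt f v r := by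
  induction h with
  | base r h =>
    rintro v rfl
    rw [ext_cs_eq_none hC] at h
    exact ⟨v, RootAt.base _ (by simpa [roots] using (mem_sdiff.1 h).1)⟩
  | step x u r h h' ih =>
    rintro v rfl
    induction u using Fin.lastCases with
    | last =>
      rw [ext_cs_eq_last] at h
      exact ⟨v, RootAt.base _ (by simpa [roots] using hC h)⟩
    | cast u =>
      rw [ext_cs_eq_cs hC] at h
      obtain ⟨r, hr⟩ := ih u rfl
      exact ⟨r, RootAt.step _ _ _ h hr⟩

theorem no_cycle_ext (hC : C ⊆ roots f) {w s : Fin n} (hp : p = some w) (hs : RootAt f w s)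
    (hsC : s ∈ C) {x R : Fin (n+1)} (h : RootAt (ext f C p) x R) :
    ¬ (x = Fin.last n ∨ ∃ u r, x = Fin.castSucc u ∧ RootAt f u r ∧ r ∈ C) := by
  subst hp
  induction h with
  | base r h =>
    rintro (rfl | ⟨u, r, rfl, h1, h2⟩)
    · simp at h
    · rw [ext_cs_eq_none hC] at h
      cases h1 with
      | base _ h3 => simp [h2] at h
      | step _ _ _ h3 => simp [roots, h3] at h
  | step x y r h h' ih =>
    rintro (rfl | ⟨u, r, rfl, h1, h2⟩)
    · simp at h
      exact ih (Or.inr ⟨w, s, h.symm, hs, hsC⟩)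
    · cases h1 with
      | base _ h3 =>
        rw [(ext_cs_eq_last _).2 h2] at h
        exact ih (Or.inl (by simpa using h.symm))
      | step _ u' _ h3 h4 =>
        rw [(ext_cs_eq_cs hC _ _).2 h3] at h
        exact ih (Or.inr ⟨u', r, by simpa using h.symm, h4, h2⟩)

theorem acyc_ext_iff (hC : C ⊆ roots f) :
    Acyc (ext f C p) ↔ Acyc f ∧ ∀ v r, p = some v → RootAt f v r → r ∉ C := by
  constructor
  · intro h
    refine ⟨fun v => ?_, fun v r hp hr hrC => ?_⟩
    · obtain ⟨R, hR⟩ := h v.castSucc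
      exact rootAt_of_ext hC hR v rfl
    · obtain ⟨R, hR⟩ := h (Fin.last n)
      exact no_cycle_ext hC hp hr hrC hR (Or.inl rfl)
  · rintro ⟨h1, h2⟩
    have hl : ∃ R, RootAt (ext f C p) (Fin.last n) R := by
      cases hp : p with
      | none => exact ⟨_, RootAt.base _ (by simp)⟩
      | some v =>
        obtain ⟨r, hr⟩ := h1 v
        exact ⟨_, RootAt.step _ _ _ (by simp) (rootAt_ext hC hr (h2 v r hp hr))⟩
    intro x
    induction x using Fin.lastCases with
    | last => exact hl
    | cast v =>
      obtain ⟨r, hr⟩ := h1 v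
      by_cases hrC : r ∈ C
      · obtain ⟨R, hR⟩ := hl
        exact ⟨R, rootAt_ext' hC hr hrC hR⟩
      · exact ⟨_, rootAt_ext hC hr hrC⟩

end

/-- predecessor data -/
def down {n : ℕ} (x : Option (Fin (n+1))) : Option (Fin n) :=
  x.bind (Fin.lastCases none (fun i => some i))

@[simp] theorem down_none {n : ℕ} : down (none : Option (Fin (n+1))) = none := rfl
@[simp] theorem down_last {n : ℕ} : down (some (Fin.last n)) = none := by simp [down]
@[simp] theorem down_cs {n : ℕ} (i : Fin n) : down (some i.castSucc) = some i := by simp [down]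
@[simp] theorem down_map {n : ℕ} (i : Option (Fin n)) : down (i.map Fin.castSucc) = i := by
  cases i <;> simp

open Classical in
noncomputable def childs {n : ℕ} (g : Fin (n+1) → Option (Fin (n+1))) : Finset (Fin n) :=
  univ.filter (fun i => g i.castSucc = some (Fin.last n))

theorem childs_sub {n : ℕ} (g : Fin (n+1) → Option (Fin (n+1))) :
    childs g ⊆ roots (fun i => down (g i.castSucc)) := by
  intro i hi
  simp [childs] at hi
  simp [roots, hi]

theorem ext_surj {n : ℕ} (g : Fin (n+1) → Option (Fin (n+1))) (hg : Acyc g) :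
    ext (fun i => down (g i.castSucc)) (childs g) (down (g (Fin.last n))) = g := by
  funext x
  have aux : ∀ y : Option (Fin (n+1)), y ≠ some (Fin.last n) → (down y).map Fin.castSucc = y := by
    intro y hy
    cases y with
    | none => rfl
    | some y =>
      induction y using Fin.lastCases with
      | last => exact absurd rfl hy
      | cast y => simp
  induction x using Fin.lastCases with
  | last =>
    rw [ext_last]
    obtain ⟨r, hr⟩ := hg (Fin.last n)
    exact aux _ hr.no_loop
  | cast v =>
    rw [ext_cs]
    by_cases h : g v.castSucc = some (Fin.last n)
    · simp [childs, h]
    · simp only [childs, mem_filter, mem_univ, true_and, h, if_false]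
      exact aux _ h

theorem down_ext {n : ℕ} {f : Fin n → Option (Fin n)} {C : Finset (Fin n)} {p : Option (Fin n)}
    (hC : C ⊆ roots f) : (fun i : Fin n => down (ext f C p i.castSucc)) = f := by
  funext i
  by_cases h : i ∈ C
  · have : f i = none := by simpa [roots] using hC h
    simp [h, this]
  · simp [h]

theorem childs_ext {n : ℕ} {f : Fin n → Option (Fin n)} {C : Finset (Fin n)} {p : Option (Fin n)} :
    childs (ext f C p) = C := by
  ext i
  simp only [childs, ext_cs_eq_last]; simp

/-- number of smaller neighbours -/
def indeg {n : ℕ} (f : Fin n → Option (Fin n)) (j : Fin n) : ℕ :=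
  (univ.filter (fun i => i < j ∧ (f i = some j ∨ f j = some i))).card

theorem indeg_ext_cs {n : ℕ} {f : Fin n → Option (Fin n)} {C : Finset (Fin n)}
    {p : Option (Fin n)} (hC : C ⊆ roots f) (j : Fin n) :
    indeg (ext f C p) j.castSucc = indeg f j := by
  unfold indeg
  symm
  apply card_bij (fun i _ => i.castSucc)
  · intro i hi
    simp only [mem_filter, mem_univ, true_and, ext_cs_eq_cs hC] at hi ⊢
    exact ⟨by simpa using hi.1, hi.2⟩
  · intro a _ b _ h; simpa using h
  · intro x hx
    simp only [mem_filter, mem_univ, true_and] at hx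
    induction x using Fin.lastCases with
    | last => exact absurd hx.1 (by simp [Fin.le_last])
    | cast i =>
      refine ⟨i, ?_, rfl⟩
      simp only [mem_filter, mem_univ, true_and, ext_cs_eq_cs hC] at hx ⊢
      exact ⟨by simpa using hx.1, hx.2⟩

theorem indeg_ext_last {n : ℕ} {f : Fin n → Option (Fin n)} {C : Finset (Fin n)}
    {p : Option (Fin n)} :
    indeg (ext f C p) (Fin.last n) = (C ∪ p.toFinset).card := by
  unfold indeg
  symm
  apply card_bij (fun i _ => i.castSucc)
  · intro i hi
    simp only [mem_union, Option.mem_toFinset, Option.mem_def] at hi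
    simp only [mem_filter, mem_univ, true_and, ext_cs_eq_last]
    refine ⟨Fin.castSucc_lt_last i, hi.imp id (fun h => by simp [h])⟩
  · intro a _ b _ h; simpa using h
  · intro x hx
    simp only [mem_filter, mem_univ, true_and] at hx
    induction x using Fin.lastCases with
    | last => exact absurd hx.1 (by simp)
    | cast i =>
      refine ⟨i, ?_, rfl⟩
      simp only [ext_cs_eq_last, ext_last] at hx
      simp only [mem_union, Option.mem_toFinset, Option.mem_def]
      refine hx.2.imp id (fun h => by simpa using h)

theorem card_roots_ext {n : ℕ} {f : Fin n → Option (Fin n)} {C : Finset (Fin n)}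
    {p : Option (Fin n)} (hC : C ⊆ roots f) :
    (roots (ext f C p)).card = (roots f).card - C.card + (if p = none then 1 else 0) := by
  rw [← card_sdiff_of_subset hC]
  have : roots (ext f C p) = (roots f \ C).map Fin.castSuccEmb ∪
      (if p = none then {Fin.last n} else ∅) := by
    ext x
    induction x using Fin.lastCases with
    | last => 
      by_cases h : p = none <;> simp [roots, h, (Fin.castSucc_lt_last _).ne]
    | cast i =>
      have := ext_cs_eq_none (p := p) hC i
      rw [roots, mem_filter, this]
      by_cases h : p = none <;> simp [h, (Fin.castSucc_lt_last _).ne]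
  rw [this, card_union_of_disjoint]
  · by_cases h : p = none <;> simp [h]
  · by_cases h : p = none <;> simp [h, (Fin.castSucc_lt_last _).ne]

open Classical in
noncomputable def forests (n : ℕ) : Finset (Fin n → Option (Fin n)) := univ.filter Acyc

theorem mem_forests {n : ℕ} {f : Fin n → Option (Fin n)} : f ∈ forests n ↔ Acyc f := by
  simp [forests]

open Classical in
noncomputable def rt {n : ℕ} (f : Fin n → Option (Fin n)) (v : Fin n) : Fin n :=
  if h : ∃ r, RootAt f v r then h.choose else v

theorem rt_spec {n : ℕ} {f : Fin n → Option (Fin n)} (hf : Acyc f) (v : Fin n) :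
    RootAt f v (rt f v) := by
  rw [rt, dif_pos (hf v)]; exact (hf v).choose_spec

theorem rt_iff {n : ℕ} {f : Fin n → Option (Fin n)} (hf : Acyc f) (v r : Fin n) :
    RootAt f v r ↔ r = rt f v :=
  ⟨fun h => h.unique (rt_spec hf v), fun h => h ▸ rt_spec hf v⟩

theorem rt_mem {n : ℕ} {f : Fin n → Option (Fin n)} (hf : Acyc f) (v : Fin n) :
    rt f v ∈ roots f := by
  simp [roots, (rt_spec hf v).root]

open Classical in
noncomputable def valid {n : ℕ} (f : Fin n → Option (Fin n)) :
    Finset (Finset (Fin n) × Option (Fin n)) :=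
  univ.filter (fun x => x.1 ⊆ roots f ∧ ∀ v, x.2 = some v → rt f v ∉ x.1)

theorem sum_forests_succ' {n : ℕ} (F : (Fin (n+1) → Option (Fin (n+1))) → ℚ) :
    ∑ g ∈ forests (n+1), F g = ∑ f ∈ forests n, ∑ x ∈ valid f, F (ext f x.1 x.2) := by
  rw [sum_sigma']
  symm
  refine sum_bij' (fun y _ => ext y.1 y.2.1 y.2.2)
    (fun g _ => ⟨fun i => down (g i.castSucc), childs g, down (g (Fin.last n))⟩) ?_ ?_ ?_ ?_ ?_
  · rintro ⟨f, C, p⟩ h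
    simp only [mem_sigma, mem_forests, valid, mem_filter, mem_univ, true_and] at h
    rw [mem_forests]
    refine (acyc_ext_iff h.2.1).2 ⟨h.1, fun v r hp hr => ?_⟩
    rw [(rt_iff h.1 v r).1 hr]
    exact h.2.2 v hp
  · intro g hg
    rw [mem_forests] at hg
    have h1 := ext_surj g hg
    rw [← h1, acyc_ext_iff (childs_sub g)] at hg
    simp only [mem_sigma, mem_forests, valid, mem_filter, mem_univ, true_and]
    exact ⟨hg.1, childs_sub g, fun v hv => hg.2 v _ hv (rt_spec hg.1 v)⟩
  · rintro ⟨f, C, p⟩ h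
    simp only [mem_sigma, mem_forests, valid, mem_filter, mem_univ, true_and] at h
    simp only [down_ext h.2.1, childs_ext, ext_last, down_map]
  · intro g hg
    exact ext_surj g (mem_forests.1 hg)
  · intros; rfl

theorem sum_forests_succ {n : ℕ} (F : (Fin (n+1) → Option (Fin (n+1))) → ℚ) :
    ∑ g ∈ forests (n+1), F g = ∑ f ∈ forests n,
      (∑ C ∈ (roots f).powerset, F (ext f C none) +
        ∑ v, ∑ C ∈ ((roots f).erase (rt f v)).powerset, F (ext f C (some v))) := by
  rw [sum_forests_succ']
  refine sum_congr rfl fun f _ => ?_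
  rw [valid, sum_filter, Fintype.sum_prod_type_right, Fintype.sum_option]
  congr 1
  · rw [← sum_filter]
    refine sum_congr ?_ fun _ _ => rfl
    ext C; simp
  · refine sum_congr rfl fun v _ => ?_
    rw [← sum_filter]
    refine sum_congr ?_ fun _ _ => rfl
    ext C; simp [subset_erase]

def wt {n : ℕ} (f : Fin n → Option (Fin n)) : ℚ := ∏ j, ((indeg f j).factorial : ℚ)

def tri (s : ℕ) : ℚ := (s : ℚ) * (s + 1) / 2

def qq {n : ℕ} (f : Fin n → Option (Fin n)) : ℚ := ∑ j, tri (indeg f j)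

theorem wt_ext {n : ℕ} {f : Fin n → Option (Fin n)} {C : Finset (Fin n)}
    {p : Option (Fin n)} (hC : C ⊆ roots f) :
    wt (ext f C p) = wt f * ((C ∪ p.toFinset).card.factorial : ℚ) := by
  rw [wt, Fin.prod_univ_castSucc, indeg_ext_last]
  simp only [indeg_ext_cs hC, wt]

theorem qq_ext {n : ℕ} {f : Fin n → Option (Fin n)} {C : Finset (Fin n)}
    {p : Option (Fin n)} (hC : C ⊆ roots f) :
    qq (ext f C p) = qq f + tri (C ∪ p.toFinset).card := by
  rw [qq, Fin.sum_univ_castSucc, indeg_ext_last]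
  simp only [indeg_ext_cs hC, qq]

/-- transition coefficient -/
def coef (n k K : ℕ) : ℚ :=
  if K ≤ k then ((k - 1).factorial : ℚ) / (K.factorial : ℚ) * (k + n * ((k - K : ℕ) : ℚ)) else 0

theorem inner_num (n k : ℕ) (hk : 1 ≤ k) (hkn : k ≤ n) (G ψ : ℕ → ℚ) :
    ∑ s ∈ range (k + 1), (k.choose s : ℚ) * ((s.factorial : ℚ) * G s * ψ (k - s + 1)) +
    n * ∑ s ∈ range k, ((k - 1).choose s : ℚ) * (((s+1).factorial : ℚ) * G (s+1) * ψ (k - s)) =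
    ∑ K ∈ range (n + 1), coef n k K * G (k - K) * ψ (K + 1) := by
  have h1 : ∑ K ∈ range (n + 1), coef n k K * G (k - K) * ψ (K + 1) =
      ∑ K ∈ range (k + 1), coef n k K * G (k - K) * ψ (K + 1) := by
    symm
    apply sum_subset (range_subset_range.2 (by omega))
    intro K _ hK
    rw [coef, if_neg (by simpa using hK)]; ring
  rw [h1]
  have h2 : ∑ s ∈ range (k + 1), (k.choose s : ℚ) * ((s.factorial : ℚ) * G s * ψ (k - s + 1)) =
      ∑ K ∈ range (k + 1), ((k.factorial : ℚ) / K.factorial) * G (k - K) * ψ (K + 1) := by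
    rw [← sum_range_reflect]
    refine sum_congr rfl fun K hK => ?_
    have hK : K ≤ k := by simpa [Nat.lt_succ_iff] using hK
    have e1 : k + 1 - 1 - K = k - K := by omega
    have e2 : k - (k - K) = K := by omega
    rw [e1, e2, Nat.choose_symm hK, Nat.cast_choose ℚ hK]
    have := Nat.factorial_ne_zero (k - K)
    have := Nat.factorial_ne_zero K
    field_simp
  have h3 : ∑ s ∈ range k, ((k - 1).choose s : ℚ) * (((s+1).factorial : ℚ) * G (s+1) * ψ (k - s)) =
      ∑ K ∈ range (k + 1),
        (((k-1).factorial : ℚ) / K.factorial * ((k - K : ℕ) : ℚ)) * G (k - K) * ψ (K + 1) := by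
    rw [sum_range_succ, Nat.sub_self, ← sum_range_reflect]
    simp only [Nat.cast_zero, mul_zero, zero_mul, add_zero]
    refine sum_congr rfl fun K hK => ?_
    have hK : K < k := by simpa using hK
    have e1 : k - 1 - K + 1 = k - K := by omega
    have e2 : k - (k - 1 - K) = K + 1 := by omega
    have hK' : K ≤ k - 1 := by omega
    rw [e2, Nat.choose_symm hK', Nat.cast_choose ℚ hK', Nat.factorial_succ, e1]
    have := Nat.factorial_ne_zero (k - 1 - K)
    have := Nat.factorial_ne_zero K
    push_cast
    field_simp
  rw [h2, h3, mul_sum, ← sum_add_distrib]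
  refine sum_congr rfl fun K hK => ?_
  have hK : K ≤ k := by simpa [Nat.lt_succ_iff] using hK
  rw [coef, if_pos hK, ← Nat.mul_factorial_pred (by omega : k ≠ 0)]
  push_cast
  ring

theorem card_roots_pos {n : ℕ} {f : Fin (n+1) → Option (Fin (n+1))} (hf : Acyc f) :
    1 ≤ (roots f).card := card_pos.2 ⟨_, rt_mem hf 0⟩

theorem card_roots_le {n : ℕ} (f : Fin n → Option (Fin n)) : (roots f).card ≤ n := by
  simpa using card_le_univ (roots f)

theorem inner_forest {n : ℕ} {f : Fin (n+1) → Option (Fin (n+1))} (hf : Acyc f) (G : ℕ → ℚ)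
    (ψ : ℕ → ℚ) (F : (Fin (n+2) → Option (Fin (n+2))) → ℚ)
    (hF : ∀ C p, C ⊆ roots f → F (ext f C p) =
      ((C ∪ p.toFinset).card.factorial : ℚ) * G (C ∪ p.toFinset).card *
        ψ (roots (ext f C p)).card) :
    (∑ C ∈ (roots f).powerset, F (ext f C none) +
        ∑ v, ∑ C ∈ ((roots f).erase (rt f v)).powerset, F (ext f C (some v))) =
    ∑ K ∈ range (n + 2), coef (n+1) (roots f).card K * G ((roots f).card - K) * ψ (K + 1) := by
  rw [← inner_num (n+1) _ (card_roots_pos hf) (card_roots_le f)]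
  congr 1
  · have : ∀ C ∈ (roots f).powerset, F (ext f C none) =
        (fun s => (s.factorial : ℚ) * G s * ψ ((roots f).card - s + 1)) C.card := by
      intro C hC
      rw [mem_powerset] at hC
      rw [hF C none hC, card_roots_ext hC]; simp
    rw [sum_congr rfl this, sum_powerset_apply_card
      (fun s => (s.factorial : ℚ) * G s * ψ ((roots f).card - s + 1))]
    simp
  · have : ∀ v, ∑ C ∈ ((roots f).erase (rt f v)).powerset, F (ext f C (some v)) =
        ∑ s ∈ range (roots f).card, (((roots f).card - 1).choose s : ℚ) *
          (((s+1).factorial : ℚ) * G (s+1) * ψ ((roots f).card - s)) := by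
      intro v
      have : ∀ C ∈ ((roots f).erase (rt f v)).powerset, F (ext f C (some v)) =
        (fun s => ((s+1).factorial : ℚ) * G (s+1) * ψ ((roots f).card - s)) C.card := by
        intro C hC
        rw [mem_powerset, subset_erase] at hC
        have hv : v ∉ C := by
          intro h
          apply hC.2
          have : f v = none := by simpa [roots] using hC.1 h
          rw [← (rt_iff hf v v).1 (RootAt.base _ this)]; exact h
        have e : (C ∪ (some v).toFinset).card = C.card + 1 := by
          rw [Option.toFinset_some, union_comm, ← insert_eq, card_insert_of_notMem hv]
        rw [hF C _ hC.1, card_roots_ext hC.1, e]; simp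
      rw [sum_congr rfl this, sum_powerset_apply_card
        (fun s => ((s+1).factorial : ℚ) * G (s+1) * ψ ((roots f).card - s)), card_erase_of_mem (rt_mem hf v),
        Nat.sub_add_cancel (card_roots_pos hf)]
      simp
    simp only [this]
    simp

theorem vander_full (b : ℕ) : ∀ M c : ℕ,
    ∑ s ∈ range (M + 1), s.choose b * (M - s).choose c = (M + 1).choose (b + c + 1) := by
  intro M
  induction M with
  | zero =>
    intro c
    cases b <;> cases c <;> simp [Nat.choose]
  | succ M ih =>
    intro c
    cases c with
    | zero =>
      have := ih 0
      simp only [Nat.choose_zero_right, mul_one, add_zero] at this ⊢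
      rw [sum_range_succ, this, Nat.choose_succ_succ (M+1)]
      ring
    | succ c =>
      rw [sum_range_succ]
      have : ∀ s ∈ range (M+1), s.choose b * (M + 1 - s).choose (c+1) =
          s.choose b * (M - s).choose c + s.choose b * (M - s).choose (c+1) := by
        intro s hs
        have hs : s ≤ M := by simpa [Nat.lt_succ_iff] using hs
        rw [Nat.succ_sub hs, Nat.choose_succ_succ, mul_add]
      rw [sum_congr rfl this, sum_add_distrib, ih, ih, Nat.choose_succ_succ (M+1)]
      simp [add_assoc]

theorem vander (b M c t : ℕ) (h1 : M ≤ c + t) (h2 : t ≤ M) :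
    ∑ s ∈ range (t + 1), (s.choose b : ℚ) * ((M - s).choose c : ℚ) =
      ((M + 1).choose (b + c + 1) : ℚ) := by
  rw [← vander_full]
  push_cast
  apply sum_subset (range_subset_range.2 (by omega))
  intro s hs' hs
  simp only [mem_range] at hs hs'
  rw [Nat.choose_eq_zero_of_lt (by omega : M - s < c)]; simp

theorem choose_step (m k : ℕ) : (m.choose (k+1) : ℚ) * (k + 1) = m.choose k * ((m : ℚ) - k) := by
  rcases le_or_gt k m with h | h
  · have := Nat.choose_succ_right_eq m k
    rw [← Nat.cast_sub h]
    exact_mod_cast this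
  · rw [Nat.choose_eq_zero_of_lt h, Nat.choose_eq_zero_of_lt (by omega : m < k+1)]; simp

theorem sum_shift (N K t : ℕ) (h : K + t = N + 1) (g : ℕ → ℚ) (hg : K = 0 → g 0 = 0) :
    ∑ J ∈ range (N + 1), (if K ≤ J + 1 then g (J + 1) else 0) = ∑ s ∈ range (t + 1), g (K + s) := by
  have h1 := sum_range_succ' (fun k => if K ≤ k then g k else 0) (N+1)
  have h2 : (if K ≤ 0 then g 0 else 0) = 0 := by
    split_ifs with h
    · exact hg (by omega)
    · rfl
  rw [h2, add_zero] at h1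
  rw [← h1, (by omega : N + 1 + 1 = K + (t + 1)), sum_range_add]
  rw [sum_eq_zero, zero_add]
  · refine sum_congr rfl fun s _ => by simp
  · intro x hx
    rw [if_neg (by simpa using hx)]

theorem ident1 (N K t : ℕ) (h : K + t = N + 1) :
    ∑ s ∈ range (t + 1), ((N + t - s).choose N : ℚ) * (K + (N + 2) * s) =
      (N + 1) * ((N + t + 1).choose (N + 1) : ℚ) := by
  have v0 := vander 0 (N + t) N t le_rfl (by omega)
  have v1 := vander 1 (N + t) N t le_rfl (by omega)
  have e : ∑ s ∈ range (t + 1), ((N + t - s).choose N : ℚ) * (K + (N + 2) * s) =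
      K * ∑ s ∈ range (t + 1), (s.choose 0 : ℚ) * ((N + t - s).choose N : ℚ) +
      (N + 2) * ∑ s ∈ range (t + 1), (s.choose 1 : ℚ) * ((N + t - s).choose N : ℚ) := by
    rw [mul_sum, mul_sum, ← sum_add_distrib]
    refine sum_congr rfl fun s _ => ?_
    simp; ring
  rw [e, v0, v1]
  have c := choose_step (N + t + 1) (N + 1)
  have hK : (K : ℚ) = N + 1 - t := by
    rw [eq_sub_iff_add_eq]; exact_mod_cast h
  rw [(by ring : 1 + N + 1 = N + 1 + 1), (by ring : 0 + N + 1 = N + 1), hK]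
  push_cast at c
  linear_combination c

theorem tri_choose (s : ℕ) : tri s = s.choose 1 + s.choose 2 := by
  rw [tri, Nat.cast_choose_two, Nat.choose_one_right]; ring

theorem s_tri_choose (s : ℕ) : s * tri s = s.choose 1 + 4 * s.choose 2 + 3 * s.choose 3 := by
  have := choose_step s 2
  rw [Nat.cast_choose_two] at *
  rw [tri, Nat.choose_one_right]
  push_cast at this
  linear_combination -this

theorem ident2 (N K t : ℕ) (h : K + t = N + 1) :
    ∑ s ∈ range (t + 1), (((N + t - s).choose N : ℚ) * tri s +
      (N + 1) * ((N + 1 + t - s).choose (N + 2) : ℚ)) * (K + (N + 2) * s) =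
      (N + 2) * (N + 1) * ((N + t + 2).choose (N + 3) : ℚ) := by
  have v1 := vander 1 (N + t) N t le_rfl (by omega)
  have v2 := vander 2 (N + t) N t le_rfl (by omega)
  have v3 := vander 3 (N + t) N t le_rfl (by omega)
  have u0 := vander 0 (N + 1 + t) (N + 2) t (by omega) (by omega)
  have u1 := vander 1 (N + 1 + t) (N + 2) t (by omega) (by omega)
  have e : ∑ s ∈ range (t + 1), (((N + t - s).choose N : ℚ) * tri s +
      (N + 1) * ((N + 1 + t - s).choose (N + 2) : ℚ)) * (K + (N + 2) * s) =
      (K + (N + 2)) * ∑ s ∈ range (t + 1), (s.choose 1 : ℚ) * ((N + t - s).choose N : ℚ) +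
      (K + 4 * (N + 2)) * ∑ s ∈ range (t + 1), (s.choose 2 : ℚ) * ((N + t - s).choose N : ℚ) +
      (3 * (N + 2)) * ∑ s ∈ range (t + 1), (s.choose 3 : ℚ) * ((N + t - s).choose N : ℚ) +
      ((N + 1) * K) *
        ∑ s ∈ range (t + 1), (s.choose 0 : ℚ) * ((N + 1 + t - s).choose (N + 2) : ℚ) +
      ((N + 1) * (N + 2)) *
        ∑ s ∈ range (t + 1), (s.choose 1 : ℚ) * ((N + 1 + t - s).choose (N + 2) : ℚ) := by
    simp only [mul_sum, ← sum_add_distrib]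
    refine sum_congr rfl fun s _ => ?_
    have a := tri_choose s
    have b := s_tri_choose s
    simp only [Nat.choose_one_right, Nat.choose_zero_right] at *
    push_cast
    linear_combination (K * ((N + t - s).choose N : ℚ)) * a +
      ((N + 2) * ((N + t - s).choose N : ℚ)) * b
  rw [e, v1, v2, v3, u0, u1]
  have c1 := choose_step (N + t + 1) (N + 2)
  have c2 := choose_step (N + t + 1) (N + 3)
  have hK : (K : ℚ) = N + 1 - t := by
    rw [eq_sub_iff_add_eq]; exact_mod_cast h
  have p1 : ((N + t + 2).choose (N + 3) : ℚ) =
    (N + t + 1).choose (N + 2) + (N + t + 1).choose (N + 3) := by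
    exact_mod_cast Nat.choose_succ_succ (N + t + 1) (N + 2)
  have p2 : ((N + t + 2).choose (N + 4) : ℚ) =
    (N + t + 1).choose (N + 3) + (N + t + 1).choose (N + 4) := by
    exact_mod_cast Nat.choose_succ_succ (N + t + 1) (N + 3)
  rw [(by ring : N + 1 + t + 1 = N + t + 2), (by ring : 1 + N + 1 = N + 2),
    (by ring : 2 + N + 1 = N + 3), (by ring : 3 + N + 1 = N + 4),
    (by ring : 0 + (N + 2) + 1 = N + 3), (by ring : 1 + (N + 2) + 1 = N + 4), p1, p2, hK]
  push_cast at c1 c2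
  rw [(by ring : N + 2 + 1 = N + 3)] at c1
  rw [(by ring : N + 3 + 1 = N + 4)] at c2
  linear_combination (N + 2) * c1 + (N + 2) * c2

def ww (N K : ℕ) : ℚ := N.factorial * (2 * N - K).choose N / K.factorial
def dd (N K : ℕ) : ℚ := (N + 1).factorial * (2 * N + 1 - K).choose (N + 2) / K.factorial

theorem ww_rec (N K : ℕ) (hK : K ≤ N + 1) :
    ∑ J ∈ range (N + 1), ww N J * coef (N + 1) (J + 1) K = ww (N + 1) K := by
  obtain ⟨t, ht⟩ : ∃ t, K + t = N + 1 := ⟨N + 1 - K, by omega⟩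
  have h1 : ∀ J ∈ range (N + 1), ww N J * coef (N + 1) (J + 1) K =
      (N.factorial / K.factorial : ℚ) * (if K ≤ J + 1 then
        (fun k : ℕ => ((2 * N + 1 - k).choose N : ℚ) * (k + (N + 1) * ((k - K : ℕ) : ℚ))) (J + 1)
        else 0) := by
    intro J hJ
    rw [ww, coef]
    split_ifs
    · beta_reduce
      have := Nat.factorial_ne_zero J
      have := Nat.factorial_ne_zero K
      rw [(by omega : 2 * N + 1 - (J + 1) = 2 * N - J), (by omega : J + 1 - 1 = J)]
      push_cast
      field_simp
    · simp
  rw [sum_congr rfl h1, ← mul_sum]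
  beta_reduce
  rw [sum_shift N K t ht (fun k : ℕ => ((2 * N + 1 - k).choose N : ℚ) * (k + (N + 1) * ((k - K : ℕ) : ℚ))) (by rintro rfl; simp)]
  have h2 : ∀ s ∈ range (t + 1), ((2 * N + 1 - (K + s)).choose N : ℚ) *
      (((K + s : ℕ) : ℚ) + (N + 1) * ((K + s - K : ℕ) : ℚ)) =
      ((N + t - s).choose N : ℚ) * (K + (N + 2) * s) := by
    intro s _
    rw [(by omega : 2 * N + 1 - (K + s) = N + t - s), (by omega : K + s - K = s)]
    push_cast
    ring
  rw [sum_congr rfl h2, ident1 N K t ht, ww, Nat.factorial_succ,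
    (by omega : 2 * (N + 1) - K = N + t + 1)]
  push_cast
  ring

theorem dd_rec (N K : ℕ) (hK : K ≤ N + 1) :
    ∑ J ∈ range (N + 1), (ww N J * (coef (N + 1) (J + 1) K * tri (J + 1 - K)) +
      dd N J * coef (N + 1) (J + 1) K) = dd (N + 1) K := by
  obtain ⟨t, ht⟩ : ∃ t, K + t = N + 1 := ⟨N + 1 - K, by omega⟩
  have h1 : ∀ J ∈ range (N + 1), (ww N J * (coef (N + 1) (J + 1) K * tri (J + 1 - K)) +
      dd N J * coef (N + 1) (J + 1) K) =
      (N.factorial / K.factorial : ℚ) * (if K ≤ J + 1 then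
        (fun k : ℕ => (((2 * N + 1 - k).choose N : ℚ) * tri (k - K) +
          (N + 1) * ((2 * N + 2 - k).choose (N + 2) : ℚ)) *
            (k + (N + 1) * ((k - K : ℕ) : ℚ))) (J + 1)
        else 0) := by
    intro J hJ
    rw [ww, dd, coef]
    split_ifs
    · beta_reduce
      have := Nat.factorial_ne_zero J
      have := Nat.factorial_ne_zero K
      rw [(by omega : 2 * N + 1 - (J + 1) = 2 * N - J), (by omega : J + 1 - 1 = J),
        (by omega : 2 * N + 2 - (J + 1) = 2 * N + 1 - J), Nat.factorial_succ]
      push_cast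
      field_simp
    · simp
  rw [sum_congr rfl h1, ← mul_sum]
  beta_reduce
  rw [sum_shift N K t ht (fun k : ℕ => (((2 * N + 1 - k).choose N : ℚ) * tri (k - K) +
          (N + 1) * ((2 * N + 2 - k).choose (N + 2) : ℚ)) *
            (k + (N + 1) * ((k - K : ℕ) : ℚ))) (by rintro rfl; simp)]
  have h2 : ∀ s ∈ range (t + 1), (((2 * N + 1 - (K + s)).choose N : ℚ) * tri (K + s - K) +
          (N + 1) * ((2 * N + 2 - (K + s)).choose (N + 2) : ℚ)) *
      (((K + s : ℕ) : ℚ) + (N + 1) * ((K + s - K : ℕ) : ℚ)) =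
      (((N + t - s).choose N : ℚ) * tri s +
      (N + 1) * ((N + 1 + t - s).choose (N + 2) : ℚ)) * (K + (N + 2) * s) := by
    intro s _
    rw [(by omega : 2 * N + 1 - (K + s) = N + t - s), (by omega : K + s - K = s),
      (by omega : 2 * N + 2 - (K + s) = N + 1 + t - s)]
    push_cast
    ring
  rw [sum_congr rfl h2, ident2 N K t ht, dd, Nat.factorial_succ, Nat.factorial_succ,
    (by omega : 2 * (N + 1) + 1 - K = N + t + 2)]
  push_cast
  ring

theorem sum_forests_one (F : (Fin 1 → Option (Fin 1)) → ℚ) :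
    ∑ f ∈ forests 1, F f = F (fun _ => none) := by
  have : forests 1 = {fun _ => none} := by
    ext f
    rw [mem_forests, mem_singleton]
    constructor
    · intro h
      funext v
      obtain ⟨r, hr⟩ := h v
      have := hr.root
      rwa [Subsingleton.elim v r]
    · rintro rfl v
      exact ⟨v, RootAt.base _ rfl⟩
  rw [this, sum_singleton]

theorem forest_ww (N : ℕ) : ∀ ψ : ℕ → ℚ,
    ∑ f ∈ forests (N + 1), wt f * ψ (roots f).card =
      ∑ K ∈ range (N + 1), ww N K * ψ (K + 1) := by
  induction N with
  | zero =>
    intro ψ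
    rw [sum_forests_one]
    simp [wt, indeg, roots, ww]
  | succ N ih =>
    intro ψ
    rw [sum_forests_succ]
    have h1 : ∀ f ∈ forests (N + 1), (∑ C ∈ (roots f).powerset,
        wt (ext f C none) * ψ (roots (ext f C none)).card +
        ∑ v, ∑ C ∈ ((roots f).erase (rt f v)).powerset,
          wt (ext f C (some v)) * ψ (roots (ext f C (some v))).card) =
        wt f * (fun k => ∑ K ∈ range (N + 2), coef (N+1) k K * ψ (K + 1)) (roots f).card := by
      intro f hf
      rw [inner_forest (mem_forests.1 hf) (fun _ => wt f) ψ
        (fun g => wt g * ψ (roots g).card), mul_sum]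
      · refine sum_congr rfl fun K _ => by ring
      · intro C p hC
        simp only [wt_ext hC]; ring
    rw [sum_congr rfl h1]
    beta_reduce
    rw [ih (fun k => ∑ K ∈ range (N + 2), coef (N+1) k K * ψ (K + 1))]
    simp only [mul_sum]
    rw [sum_comm]
    refine sum_congr rfl fun K hK => ?_
    rw [← ww_rec N K (by simpa [Nat.lt_succ_iff] using hK), sum_mul]
    refine sum_congr rfl fun J _ => by ring

theorem forest_dd (N : ℕ) : ∀ ψ : ℕ → ℚ,
    ∑ f ∈ forests (N + 1), wt f * qq f * ψ (roots f).card =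
      ∑ K ∈ range (N + 1), dd N K * ψ (K + 1) := by
  induction N with
  | zero =>
    intro ψ
    rw [sum_forests_one]
    simp [wt, qq, tri, indeg, roots, dd]
  | succ N ih =>
    intro ψ
    rw [sum_forests_succ]
    have h1 : ∀ f ∈ forests (N + 1), (∑ C ∈ (roots f).powerset,
        wt (ext f C none) * qq (ext f C none) * ψ (roots (ext f C none)).card +
        ∑ v, ∑ C ∈ ((roots f).erase (rt f v)).powerset,
          wt (ext f C (some v)) * qq (ext f C (some v)) * ψ (roots (ext f C (some v))).card) =
        wt f * (fun k => ∑ K ∈ range (N + 2), coef (N+1) k K * tri (k - K) * ψ (K + 1))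
          (roots f).card +
        wt f * qq f * (fun k => ∑ K ∈ range (N + 2), coef (N+1) k K * ψ (K + 1))
          (roots f).card := by
      intro f hf
      rw [inner_forest (mem_forests.1 hf) (fun s => wt f * (qq f + tri s)) ψ
        (fun g => wt g * qq g * ψ (roots g).card), mul_sum, mul_sum, ← sum_add_distrib]
      · refine sum_congr rfl fun K _ => by ring
      · intro C p hC
        simp only [wt_ext hC, qq_ext hC]; ring
    rw [sum_congr rfl h1, sum_add_distrib]
    beta_reduce
    rw [ih (fun k => ∑ K ∈ range (N + 2), coef (N+1) k K * ψ (K + 1)), forest_ww N (fun k => ∑ K ∈ range (N + 2), coef (N+1) k K * tri (k - K) * ψ (K + 1))]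
    simp only [mul_sum]
    rw [sum_comm, sum_comm (s := range (N + 1)) (t := range (N + 2)), ← sum_add_distrib]
    refine sum_congr rfl fun K hK => ?_
    rw [← dd_rec N K (by simpa [Nat.lt_succ_iff] using hK), sum_mul, ← sum_add_distrib]
    refine sum_congr rfl fun J _ => by ring

theorem forest_final (N : ℕ) :
    ∑ f ∈ (forests (N + 1)).filter (fun f => (roots f).card = 1), wt f * qq f =
      (N + 1) * (N.factorial * (2 * N + 1).choose (N + 2)) := by
  have := forest_dd N (fun k => if k = 1 then 1 else 0)
  rw [sum_filter]
  rw [sum_eq_single (s := range (N + 1)) 0] at this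
  · simp only [mul_ite, mul_one, mul_zero] at this
    rw [this]
    simp [dd, Nat.factorial_succ]; ring
  · intro b _ hb; simp [hb]
  · simp

def graphOf {V : Type} (f : V → Option V) : SimpleGraph V where
  Adj i j := i ≠ j ∧ (f i = some j ∨ f j = some i)
  symm := ⟨fun _ _ h => ⟨h.1.symm, h.2.symm⟩⟩
  loopless := ⟨fun _ h => h.1 rfl⟩

theorem rootAt_reachable {V : Type} {f : V → Option V} {v r : V} (h : RootAt f v r) :
    (graphOf f).Reachable v r := by
  induction h with
  | base r h => exact SimpleGraph.Reachable.refl _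
  | step v u r h h' ih =>
    by_cases e : v = u
    · rw [e]; exact ih
    · have : (graphOf f).Adj v u := ⟨e, Or.inl h⟩
      exact this.reachable.trans ih

theorem graphOf_connected {V : Type} {f : V → Option V} {r : V} (hf : Acyc f)
    (hr : ∀ v, f v = none ↔ v = r) : (graphOf f).Connected := by
  have h : ∀ v, (graphOf f).Reachable v r := by
    intro v
    obtain ⟨s, hs⟩ := hf v
    have := (hr s).1 hs.root
    subst this
    exact rootAt_reachable hs
  haveI : Nonempty V := ⟨r⟩
  exact SimpleGraph.Connected.mk fun a b => (h a).trans (h b).symm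

theorem graphOf_isTree {V : Type} [Finite V] {f : V → Option V} {r : V} (hf : Acyc f)
    (hr : ∀ v, f v = none ↔ v = r) : (graphOf f).IsTree := by
  have hc := graphOf_connected hf hr
  rw [SimpleGraph.isTree_iff_connected_and_card]
  refine ⟨hc, le_antisymm ?_ hc.card_vert_le_card_edgeSet_add_one⟩
  have hsub : (graphOf f).edgeSet ⊆ (fun v => s(v, (f v).getD v)) '' ({r}ᶜ : Set V) := by
    intro e he
    induction e using Sym2.ind with
    | _ a b =>
      rcases he.2 with h | h
      · refine ⟨a, ?_, by simp [h]⟩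
        intro h'
        rw [(hr a).2 h'] at h; cases h
      · refine ⟨b, ?_, by simp [h, Sym2.eq_swap]⟩
        intro h'
        rw [(hr b).2 h'] at h; cases h
  have h1 := (Set.ncard_le_ncard hsub (Set.toFinite _)).trans (Set.ncard_image_le (Set.toFinite _))
  have h2 := Set.ncard_add_ncard_compl ({r} : Set V)
  rw [Set.ncard_singleton] at h2
  rw [Nat.card_coe_set_eq]
  omega

theorem exists_parent {V : Type} [Finite V] {G : SimpleGraph V} (hG : G.IsTree) (r : V) :
    ∃ f : V → Option V, Acyc f ∧ (∀ v, f v = none ↔ v = r) ∧ graphOf f = G := by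
  classical
  have hc := hG.connected
  have step : ∀ v, v ≠ r → ∃ u, G.Adj v u ∧ G.dist u r < G.dist v r := by
    intro v hv
    obtain ⟨w, hw⟩ := hc.exists_walk_length_eq_dist v r
    cases w with
    | nil => exact absurd rfl hv
    | cons h w' =>
      refine ⟨_, h, ?_⟩
      rw [← hw, SimpleGraph.Walk.length_cons]
      exact Nat.lt_succ_of_le (SimpleGraph.dist_le w')
  choose! p hp1 hp2 using step
  let f : V → Option V := fun v => if v = r then none else some (p v)
  have hr : ∀ v, f v = none ↔ v = r := by
    intro v
    by_cases h : v = r <;> simp [f, h]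
  have hf : Acyc f := by
    intro v
    refine ⟨r, ?_⟩
    induction hn : G.dist v r using Nat.strong_induction_on generalizing v with
    | _ n ih =>
      by_cases h : v = r
      · subst h; exact RootAt.base _ ((hr _).2 rfl)
      · exact RootAt.step _ (p v) _ (by simp [f, h]) (ih _ (hn ▸ hp2 v h) _ rfl)
  refine ⟨f, hf, hr, ?_⟩
  have hle : graphOf f ≤ G := by
    have aux : ∀ a b, f a = some b → G.Adj a b := by
      intro a b h
      by_cases e : a = r
      · simp [f, e] at h
      · simp only [f, e, if_false, Option.some.injEq] at h
        rw [← h]; exact hp1 a e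
    intro a b hab
    rcases hab.2 with h | h
    · exact aux a b h
    · exact (aux b a h).symm
  exact le_antisymm hle
    ((SimpleGraph.isTree_iff_minimal_connected.1 hG).2 (graphOf_connected hf hr) hle)

def edge {n : ℕ} (f : Fin n → Option (Fin n)) (i j : Fin n) : Prop :=
  i < j ∧ (f i = some j ∨ f j = some i)

instance {n : ℕ} (f : Fin n → Option (Fin n)) (i j : Fin n) : Decidable (edge f i j) := by
  unfold edge; infer_instance

def mk {n : ℕ} (f : Fin n → Option (Fin n)) (e : Fin n × Fin n) (i j : Fin n) : ℕ :=
  if edge f i j then (if (i, j) = e then 2 else 1) else 0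

theorem mk_ne {n : ℕ} (f : Fin n → Option (Fin n)) (e : Fin n × Fin n) (i j : Fin n) :
    mk f e i j ≠ 0 ↔ edge f i j := by
  unfold mk; split_ifs <;> simp_all

theorem mk_two {n : ℕ} (f : Fin n → Option (Fin n)) (e : Fin n × Fin n) (i j : Fin n) :
    mk f e i j = 2 ↔ edge f i j ∧ (i, j) = e := by
  unfold mk; split_ifs <;> simp_all

theorem fromRel_iff {n : ℕ} (f : Fin n → Option (Fin n)) (m : Fin n → Fin n → ℕ) :
    (SimpleGraph.fromRel fun i j => i < j ∧ m i j ≠ 0) = graphOf f ↔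
      ∀ i j, i < j → (m i j ≠ 0 ↔ edge f i j) := by
  constructor
  · intro h i j hij
    have := congrArg (fun G : SimpleGraph (Fin n) => G.Adj i j) h
    simp only [SimpleGraph.fromRel_adj, graphOf, eq_iff_iff] at this
    simp only [hij, hij.not_gt, edge] at this ⊢
    simpa [hij.ne] using this
  · intro h
    ext i j
    simp only [SimpleGraph.fromRel_adj, graphOf]
    rcases lt_trichotomy i j with hij | hij | hij
    · have := h i j hij
      simp only [hij, hij.not_gt, edge] at this ⊢
      simpa [hij.ne] using this
    · simp [hij]
    · have := h j i hij
      simp only [hij, hij.not_gt, edge] at this ⊢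
      simpa [or_comm, hij.ne'] using this

open Classical in
noncomputable def pairs {n : ℕ} (r : Fin n) :
    Finset ((Fin n → Option (Fin n)) × (Fin n × Fin n)) :=
  univ.filter (fun x => (Acyc x.1 ∧ ∀ v, x.1 v = none ↔ v = r) ∧ edge x.1 x.2.1 x.2.2)

theorem mk_bijOn {n : ℕ} (r : Fin n) :
    Set.BijOn (fun x : (Fin n → Option (Fin n)) × (Fin n × Fin n) => mk x.1 x.2)
      (pairs r : Set ((Fin n → Option (Fin n)) × (Fin n × Fin n)))
      {m : Fin n → Fin n → ℕ | IsDoubledEdgeTree m} := by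
  refine ⟨?_, ?_, ?_⟩
  · rintro ⟨f, e⟩ hx
    simp only [pairs, coe_filter, mem_univ, true_and, Set.mem_setOf_eq] at hx
    obtain ⟨⟨hf, hr⟩, he⟩ := hx
    refine ⟨?_, ?_, ?_, ?_⟩
    · intro i j hij
      simp [mk, edge, hij]
    · rw [(fromRel_iff f (mk f e)).2 (fun i j _ => mk_ne f e i j)]
      exact graphOf_isTree hf hr
    · intro i j _ h
      rw [mk_ne] at h
      simp only [mk, h, if_true]
      split_ifs <;> simp
    · have : {p : Fin n × Fin n | p.1 < p.2 ∧ mk f e p.1 p.2 = 2} = {e} := by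
        ext ⟨i, j⟩
        simp only [Set.mem_setOf_eq, mk_two, Set.mem_singleton_iff]
        constructor
        · exact fun h => h.2.2
        · rintro rfl; exact ⟨he.1, he, rfl⟩
      change Set.ncard {p : Fin n × Fin n | p.1 < p.2 ∧ mk f e p.1 p.2 = 2} = 1
      rw [this, Set.ncard_singleton]
  · rintro ⟨f, e⟩ hx ⟨g, e'⟩ hy hxy
    simp only [pairs, coe_filter, mem_univ, true_and, Set.mem_setOf_eq] at hx hy hxy
    have hE : ∀ i j, edge f i j ↔ edge g i j := by
      intro i j
      rw [← mk_ne f e, ← mk_ne g e', hxy]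
    have hfg : f = g := by
      refine eq_of_same_edges hy.1.1 (fun v => (hx.1.2 v).trans (hy.1.2 v).symm) ?_
      intro i j
      rcases lt_trichotomy i j with hij | hij | hij
      · have := hE i j
        simpa [edge, hij] using this
      · subst hij
        obtain ⟨_, h1⟩ := hx.1.1 i
        obtain ⟨_, h2⟩ := hy.1.1 i
        simp [h1.no_loop, h2.no_loop]
      · have := hE j i
        simpa [edge, hij, or_comm] using this
    subst hfg
    have h2 := (mk_two f e e.1 e.2).2 ⟨hx.2, rfl⟩
    rw [hxy, mk_two] at h2
    exact Prod.ext rfl h2.2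
  · intro m hm
    obtain ⟨h1, h2, h3, h4⟩ := hm
    obtain ⟨f, hf, hr, hG⟩ := exists_parent h2 r
    have hE := (fromRel_iff f m).1 hG.symm
    obtain ⟨e, he⟩ := Set.ncard_eq_one.1 h4
    have he' : ∀ i j, i < j → (m i j = 2 ↔ (i, j) = e) := by
      intro i j hij
      have : (i, j) ∈ {p : Fin n × Fin n | p.1 < p.2 ∧ m p.1 p.2 = 2} ↔ (i, j) = e := by
        rw [he]; rfl
      rw [← this]; simp [hij]
    have hee : e.1 < e.2 ∧ m e.1 e.2 = 2 := by
      have : e ∈ {p : Fin n × Fin n | p.1 < p.2 ∧ m p.1 p.2 = 2} := by rw [he]; rfl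
      exact this
    refine ⟨(f, e), ?_, ?_⟩
    · simp only [pairs, coe_filter, mem_univ, true_and, Set.mem_setOf_eq]
      exact ⟨⟨hf, hr⟩, (hE _ _ hee.1).1 (by omega)⟩
    · funext i j
      by_cases hij : i < j
      · have a := hE i j hij
        have b := he' i j hij
        have c := h3 i j hij
        simp only [mk]
        split_ifs with u v
        · exact (b.2 v).symm
        · rcases c (a.2 u) with h | h
          · exact h.symm
          · exact absurd (b.1 h) v
        · by_contra h; exact u (a.1 (Ne.symm h))
      · rw [h1 i j hij]; simp [mk, edge, hij]

theorem multi_col {n : ℕ} (f : Fin n → Option (Fin n)) (e : Fin n × Fin n)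
    (he : edge f e.1 e.2) (j : Fin n) :
    (Nat.multinomial (univ.filter (· < j)) (fun i => mk f e i j) : ℚ) =
      (indeg f j).factorial * (if j = e.2 then ((indeg f j : ℚ) + 1) / 2 else 1) := by
  have spec := Nat.multinomial_spec (univ.filter (· < j)) (fun i => mk f e i j)
  have hsum : ∑ i ∈ univ.filter (· < j), mk f e i j = indeg f j + if j = e.2 then 1 else 0 := by
    have h1 : ∀ i ∈ univ.filter (· < j), mk f e i j =
        (if edge f i j then 1 else 0) + (if i = e.1 then (if j = e.2 then 1 else 0) else 0) := by
      intro i _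
      unfold mk
      by_cases h : (i, j) = e
      · subst h; simp [he]
      · have : ¬ (i = e.1 ∧ j = e.2) := fun h' => h (Prod.ext h'.1 h'.2)
        simp only [h, if_false]
        by_cases h1 : i = e.1 <;> by_cases h2 : j = e.2 <;> simp_all
    rw [sum_congr rfl h1, sum_add_distrib]
    congr 1
    · rw [indeg, ← sum_filter, filter_filter, card_eq_sum_ones]
      refine sum_congr ?_ fun _ _ => rfl
      ext i; simp [edge]
    · rw [sum_ite_eq']
      by_cases h2 : j = e.2
      · subst h2; simp [he.1]
      · simp [h2]
  have hprod : ∏ i ∈ univ.filter (· < j), (mk f e i j).factorial = if j = e.2 then 2 else 1 := by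
    have h1 : ∀ i ∈ univ.filter (· < j), (mk f e i j).factorial =
        (if i = e.1 then (if j = e.2 then 2 else 1) else 1) := by
      intro i _
      unfold mk
      by_cases h : (i, j) = e
      · subst h; simp [he]
      · have : ¬ (i = e.1 ∧ j = e.2) := fun h' => h (Prod.ext h'.1 h'.2)
        simp only [h, if_false]
        by_cases h1 : i = e.1 <;> by_cases h2 : j = e.2 <;> split_ifs <;> simp_all
    rw [prod_congr rfl h1, prod_ite_eq']
    by_cases h2 : j = e.2
    · subst h2; simp [he.1]
    · simp [h2]
  rw [hsum, hprod] at spec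
  have spec' := congrArg (Nat.cast : ℕ → ℚ) spec
  by_cases h : j = e.2
  · simp only [h, if_true, Nat.factorial_succ] at spec' ⊢
    push_cast at spec'
    linear_combination spec' / 2
  · simp only [h, if_false, add_zero, one_mul] at spec' ⊢
    rw [spec', mul_one]

theorem multiWeight_mk {n : ℕ} (f : Fin n → Option (Fin n)) (e : Fin n × Fin n)
    (he : edge f e.1 e.2) :
    (multiWeight (mk f e) : ℚ) = wt f * (((indeg f e.2 : ℚ) + 1) / 2) := by
  rw [multiWeight, Nat.cast_prod, prod_congr rfl (fun j _ => multi_col f e he j), prod_mul_distrib,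
    prod_ite_eq']
  simp [wt]

theorem sum_edges {n : ℕ} (f : Fin n → Option (Fin n)) :
    ∑ e : Fin n × Fin n, (if edge f e.1 e.2 then (multiWeight (mk f e) : ℚ) else 0) =
      wt f * qq f := by
  have h1 : ∀ e : Fin n × Fin n, (if edge f e.1 e.2 then (multiWeight (mk f e) : ℚ) else 0) =
      (if edge f e.1 e.2 then wt f * (((indeg f e.2 : ℚ) + 1) / 2) else 0) := by
    intro e
    split_ifs with h
    · exact multiWeight_mk f e h
    · rfl
  rw [sum_congr rfl (fun e _ => h1 e), Fintype.sum_prod_type_right, qq, mul_sum]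
  refine sum_congr rfl fun j _ => ?_
  simp only []
  rw [← sum_filter, sum_const, nsmul_eq_mul]
  have : (univ.filter (fun i => edge f i j)).card = indeg f j := rfl
  rw [this, tri]; ring

theorem sum_pairs {n : ℕ} (r : Fin n) :
    ((∑ᶠ m ∈ {m : Fin n → Fin n → ℕ | IsDoubledEdgeTree m}, multiWeight m : ℕ) : ℚ) =
      ∑ f ∈ (forests n).filter (fun f => ∀ v, f v = none ↔ v = r), wt f * qq f := by
  classical
  rw [← finsum_mem_eq_of_bijOn (f := fun x => multiWeight (mk x.1 x.2)) _ (mk_bijOn r)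
    (fun _ _ => rfl), finsum_mem_coe_finset, Nat.cast_sum, pairs, sum_filter,
    Fintype.sum_prod_type, forests, filter_filter, sum_filter]
  refine sum_congr rfl fun f _ => ?_
  by_cases h : Acyc f ∧ ∀ v, f v = none ↔ v = r
  · rw [if_pos h, ← sum_edges]
    refine sum_congr rfl fun e _ => ?_
    simp only [h, true_and]
    simp
  · rw [if_neg h]
    exact sum_eq_zero fun e _ => by rw [if_neg (fun h' => h h'.1)]

theorem main (N : ℕ) :
    ∑ᶠ m ∈ {m : Fin (N + 1) → Fin (N + 1) → ℕ | IsDoubledEdgeTree m}, multiWeight m =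
      N.factorial * (2 * N + 1).choose (N + 2) := by
  classical
  have h := forest_final N
  have h2 : ∑ r : Fin (N + 1),
      ((∑ᶠ m ∈ {m : Fin (N + 1) → Fin (N + 1) → ℕ | IsDoubledEdgeTree m}, multiWeight m : ℕ) : ℚ) =
      ∑ f ∈ (forests (N + 1)).filter (fun f => (roots f).card = 1), wt f * qq f := by
    rw [sum_congr rfl (fun r _ => sum_pairs r)]
    simp only [sum_filter]
    rw [sum_comm]
    refine sum_congr rfl fun f _ => ?_
    have e : ∀ r, (∀ v, f v = none ↔ v = r) ↔ roots f = {r} := by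
      intro r
      rw [Finset.ext_iff]
      simp [roots]
    simp only [e]
    split_ifs with hc
    · obtain ⟨r, hr⟩ := card_eq_one.1 hc
      simp [hr]
    · refine sum_eq_zero fun r _ => ?_
      rw [if_neg]
      intro h; apply hc; rw [h, card_singleton]
  rw [h, sum_const, card_univ, Fintype.card_fin, nsmul_eq_mul] at h2
  push_cast at h2
  have h3 := mul_left_cancel₀ (by positivity) h2
  exact_mod_cast h3

end DET

theorem weighted_doubled_edge_tree_count (d : ℕ) (hd : 2 ≤ d) :
    ∑ᶠ m ∈ {m : Fin d → Fin d → ℕ | IsDoubledEdgeTree m}, multiWeight m =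
      Nat.choose (2 * d - 1) (d - 2) * (d - 1).factorial := by
  obtain ⟨N, rfl⟩ : ∃ N, d = N + 2 := ⟨d - 2, by omega⟩
  rw [DET.main (N + 1), mul_comm]
  congr 1
  rw [(by omega : 2 * (N + 2) - 1 = 2 * (N + 1) + 1), (by omega : N + 2 - 2 = N)]
  exact Nat.choose_symm_of_eq_add (by omega)
end
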